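/- arXiv:1502.02336 — 6 statements merged into one kernel-verified Lean document; each statement's English description precedes it below -/
import Mathlib

section
/- Let n, k be positive integers, σ > 0, Φ a real n×k matrix with ‖ΦᵀΦ − n·I_k‖₂ < n/2, θ₀ ∈ ℝ^k and R ∈ ℝⁿ. Let Y ~ N(Φθ₀ + R, σ²·Iₙ) and set θ_Y = (ΦᵀΦ)⁻¹ Φᵀ Y. Then E‖θ_Y − θ₀‖² ≤ 2σ²k/n + 2‖R‖²/n. -/
open MeasureTheory ProbabilityTheory Matrix

/-- The `ℓ²→ℓ²` operator (spectral) norm of a square real matrix. -/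
noncomputable def opNorm {k : ℕ} (A : Matrix (Fin k) (Fin k) ℝ) : ℝ :=
  ‖Matrix.toEuclideanCLM (𝕜 := ℝ) (n := Fin k) A‖

/-! Write `B = (ΦᵀΦ)⁻¹Φᵀ`. Since `BΦ = 1` and `BBᵀ = (ΦᵀΦ)⁻¹`, the bias-variance decomposition gives
`E‖BY - θ₀‖² = σ² tr (ΦᵀΦ)⁻¹ + ‖BR‖²`. The trace is at most `k‖(ΦᵀΦ)⁻¹‖`, and
`‖BR‖² ≤ ‖BBᵀ‖‖R‖² = ‖(ΦᵀΦ)⁻¹‖‖R‖²`, so both terms are controlled by `‖(ΦᵀΦ)⁻¹‖`, which is at most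
`(c - r)⁻¹` as soon as `ΦᵀΦ` is within `r < c` of `c • 1`. -/

section NormedAlgebra

variable {𝕜 A : Type*} [NormedField 𝕜] [NormedRing A] [NormedAlgebra 𝕜 A] {a b : A} {c : 𝕜} {r : ℝ}

lemma isUnit_of_norm_sub_smul_one_mul_norm_one_lt [CompleteSpace A]
    (h : ‖a - c • (1 : A)‖ * ‖(1 : A)‖ < ‖c‖) : IsUnit a := by
  rw [norm_sub_rev] at h
  have hc : IsUnit (algebraMap 𝕜 A c - (c • 1 - a)) := spectrum.mem_resolventSet_of_norm_lt_mul h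
  rwa [Algebra.algebraMap_eq_smul_one, sub_sub_cancel] at hc

lemma norm_le_div_of_mul_eq_one_of_norm_sub_smul_one_le (hab : a * b = 1)
    (ha : ‖a - c • (1 : A)‖ ≤ r) (hr : r < ‖c‖) : ‖b‖ ≤ ‖(1 : A)‖ / (‖c‖ - r) := by
  have hcb : c • b = 1 - (a - c • 1) * b := by
    rw [sub_mul, hab, smul_one_mul, sub_sub_cancel]
  have hle : ‖c‖ * ‖b‖ ≤ ‖(1 : A)‖ + r * ‖b‖ :=
    calc ‖c‖ * ‖b‖ = ‖1 - (a - c • 1) * b‖ := by rw [← norm_smul, hcb]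
      _ ≤ ‖(1 : A)‖ + ‖a - c • (1 : A)‖ * ‖b‖ := norm_sub_le_of_le le_rfl (norm_mul_le _ _)
      _ ≤ ‖(1 : A)‖ + r * ‖b‖ := by gcongr
  rw [le_div_iff₀ (sub_pos.mpr hr)]
  linarith

end NormedAlgebra

section SpectralNorm

open scoped Matrix.Norms.L2Operator

variable {𝕜 m n : Type*} [RCLike 𝕜] [Fintype m] [Fintype n] [DecidableEq n]

lemma l2_opNorm_one_le : ‖(1 : Matrix n n 𝕜)‖ ≤ 1 := by
  rw [cstar_norm_def, map_one]
  exact ContinuousLinearMap.norm_id_le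

lemma isUnit_of_l2_opNorm_sub_smul_one_lt {G : Matrix n n 𝕜} {c : 𝕜}
    (hG : ‖G - c • (1 : Matrix n n 𝕜)‖ < ‖c‖) : IsUnit G :=
  isUnit_of_norm_sub_smul_one_mul_norm_one_lt
    ((mul_le_of_le_one_right (norm_nonneg _) l2_opNorm_one_le).trans_lt hG)

lemma l2_opNorm_inv_le {G : Matrix n n 𝕜} {c : 𝕜} {r : ℝ}
    (hG : ‖G - c • (1 : Matrix n n 𝕜)‖ ≤ r) (hr : r < ‖c‖) : ‖G⁻¹‖ ≤ 1 / (‖c‖ - r) := by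
  have hdet : IsUnit G.det :=
    (isUnit_iff_isUnit_det G).mp (isUnit_of_l2_opNorm_sub_smul_one_lt (hG.trans_lt hr))
  calc ‖G⁻¹‖ ≤ ‖(1 : Matrix n n 𝕜)‖ / (‖c‖ - r) :=
        norm_le_div_of_mul_eq_one_of_norm_sub_smul_one_le (mul_nonsing_inv G hdet) hG hr
    _ ≤ 1 / (‖c‖ - r) :=
        div_le_div_of_nonneg_right l2_opNorm_one_le (sub_pos.mpr hr).le

lemma norm_entry_le_l2_opNorm (A : Matrix m n 𝕜) (i : m) (j : n) : ‖A i j‖ ≤ ‖A‖ := by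
  have h := (PiLp.norm_apply_le _ i).trans (l2_opNorm_mulVec A (EuclideanSpace.single j 1))
  simpa using h

lemma norm_trace_le_card_mul_l2_opNorm (A : Matrix n n 𝕜) :
    ‖A.trace‖ ≤ Fintype.card n * ‖A‖ :=
  calc ‖A.trace‖ ≤ ∑ i, ‖A i i‖ := norm_sum_le _ _
    _ ≤ ∑ _i : n, ‖A‖ := Finset.sum_le_sum fun i _ => norm_entry_le_l2_opNorm A i i
    _ = Fintype.card n * ‖A‖ := by
        rw [Finset.sum_const, Finset.card_univ, nsmul_eq_mul]

lemma sum_norm_sq_mulVec_le (A : Matrix m n 𝕜) (v : n → 𝕜) :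
    ∑ i, ‖(A *ᵥ v) i‖ ^ 2 ≤ ‖A‖ ^ 2 * ∑ j, ‖v j‖ ^ 2 := by
  have h := pow_le_pow_left₀ (norm_nonneg _) (l2_opNorm_mulVec A (WithLp.toLp 2 v)) 2
  rwa [mul_pow, EuclideanSpace.norm_sq_eq, EuclideanSpace.norm_sq_eq] at h

end SpectralNorm

section LeastSquares

variable {K ι κ : Type*} [CommRing K] [Fintype ι] [Fintype κ] [DecidableEq κ]

/-- The matrix of the ordinary least-squares estimator `Y ↦ (ΦᵀΦ)⁻¹ΦᵀY` with design matrix `Φ`. It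
solves the least-squares problem only when `ΦᵀΦ` is invertible; otherwise it is `0`. -/
noncomputable def leastSquares (Φ : Matrix ι κ K) : Matrix κ ι K :=
  (Φᵀ * Φ)⁻¹ * Φᵀ

variable {Φ : Matrix ι κ K}

lemma leastSquares_mul_self (hΦ : IsUnit (Φᵀ * Φ)) : leastSquares Φ * Φ = 1 := by
  rw [leastSquares, Matrix.mul_assoc, nonsing_inv_mul _ ((isUnit_iff_isUnit_det _).mp hΦ)]

lemma leastSquares_mul_transpose (hΦ : IsUnit (Φᵀ * Φ)) :
    leastSquares Φ * (leastSquares Φ)ᵀ = (Φᵀ * Φ)⁻¹ := by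
  have hsymm : (leastSquares Φ)ᵀ = Φ * (Φᵀ * Φ)⁻¹ := by
    rw [leastSquares, transpose_mul, transpose_transpose, transpose_nonsing_inv, transpose_mul,
      transpose_transpose]
  rw [hsymm, ← Matrix.mul_assoc, leastSquares_mul_self hΦ, Matrix.one_mul]

open scoped Matrix.Norms.L2Operator in
lemma sq_l2_opNorm_leastSquares [DecidableEq ι] {Φ : Matrix ι κ ℝ} (hΦ : IsUnit (Φᵀ * Φ)) :
    ‖leastSquares Φ‖ ^ 2 = ‖(Φᵀ * Φ)⁻¹‖ := by
  have hnorm : ‖(leastSquares Φ)ᵀ‖ = ‖leastSquares Φ‖ := by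
    rw [← conjTranspose_eq_transpose_of_trivial, l2_opNorm_conjTranspose]
  have h := l2_opNorm_conjTranspose_mul_self (leastSquares Φ)ᵀ
  rw [conjTranspose_eq_transpose_of_trivial, transpose_transpose, leastSquares_mul_transpose hΦ,
    hnorm] at h
  rw [h, sq]

end LeastSquares

section SecondMoments

variable {Ω ι κ : Type*} {mΩ : MeasurableSpace Ω} {P : Measure Ω}

/-- The covariance matrix of a random vector `Y : Ω → ι → ℝ`. Its entries are meaningful only when
the coordinates of `Y` are square-integrable. -/
noncomputable def covarianceMatrix (Y : Ω → ι → ℝ) (P : Measure Ω) : Matrix ι ι ℝ :=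
  Matrix.of fun i j => cov[fun ω => Y ω i, fun ω => Y ω j; P]

variable [Fintype ι] [Fintype κ] {Y : Ω → ι → ℝ}

lemma memLp_dotProduct {p : ENNReal} (hY : ∀ i, MemLp (fun ω => Y ω i) p P) (a : ι → ℝ) :
    MemLp (fun ω => a ⬝ᵥ Y ω) p P :=
  memLp_finsetSum _ fun i _ => (hY i).const_mul (a i)

lemma integral_dotProduct (hY : ∀ i, Integrable (fun ω => Y ω i) P) (a : ι → ℝ) :
    ∫ ω, a ⬝ᵥ Y ω ∂P = a ⬝ᵥ fun i => ∫ ω, Y ω i ∂P := by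
  simp only [dotProduct]
  rw [integral_finsetSum _ fun i _ => (hY i).const_mul (a i)]
  simp only [integral_const_mul]

lemma variance_dotProduct [IsFiniteMeasure P] (hY : ∀ i, MemLp (fun ω => Y ω i) 2 P)
    (a : ι → ℝ) : Var[fun ω => a ⬝ᵥ Y ω; P] = a ⬝ᵥ covarianceMatrix Y P *ᵥ a := by
  simp only [dotProduct, mulVec, covarianceMatrix, of_apply]
  rw [variance_fun_sum fun i => (hY i).const_mul (a i)]
  simp only [covariance_const_mul_left, covariance_const_mul_right, Finset.mul_sum]
  exact Finset.sum_congr rfl fun i _ => Finset.sum_congr rfl fun j _ => by ring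

lemma integral_sub_const_sq [IsProbabilityMeasure P] {X : Ω → ℝ} (hX : MemLp X 2 P) (b : ℝ) :
    ∫ ω, (X ω - b) ^ 2 ∂P = Var[X; P] + (∫ ω, X ω ∂P - b) ^ 2 := by
  have hmean : ∫ ω, (X ω - b) ∂P = ∫ ω, X ω ∂P - b := by
    rw [integral_sub (hX.integrable one_le_two) (integrable_const b), integral_const,
      probReal_univ, one_smul]
  have hXb : MemLp (fun ω => X ω - b) 2 P := hX.sub (memLp_const b)
  rw [← variance_sub_const hX.aestronglyMeasurable b, variance_eq_sub hXb, hmean, sub_add_cancel]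
  rfl

lemma integral_sum_sq_mulVec_sub [IsProbabilityMeasure P] (hY : ∀ i, MemLp (fun ω => Y ω i) 2 P)
    (A : Matrix κ ι ℝ) (b : κ → ℝ) :
    ∫ ω, ∑ j, ((A *ᵥ Y ω) j - b j) ^ 2 ∂P
      = (A * covarianceMatrix Y P * Aᵀ).trace
        + ∑ j, ((A *ᵥ fun i => ∫ ω, Y ω i ∂P) j - b j) ^ 2 := by
  have hA : ∀ j, MemLp (fun ω => (A *ᵥ Y ω) j) 2 P := fun j => memLp_dotProduct hY (A j)
  have hint : ∀ j, Integrable (fun ω => ((A *ᵥ Y ω) j - b j) ^ 2) P := fun j =>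
    ((hA j).sub (memLp_const (b j))).integrable_sq
  rw [integral_finsetSum _ fun j _ => hint j, trace, ← Finset.sum_add_distrib]
  refine Finset.sum_congr rfl fun j _ => ?_
  have hvar : Var[fun ω => (A *ᵥ Y ω) j; P] = (A * covarianceMatrix Y P * Aᵀ).diag j := by
    rw [diag_apply, Matrix.mul_assoc]
    exact variance_dotProduct hY (A j)
  have hmean : ∫ ω, (A *ᵥ Y ω) j ∂P = (A *ᵥ fun i => ∫ ω, Y ω i ∂P) j :=
    integral_dotProduct (fun i => (hY i).integrable one_le_two) (A j)
  rw [integral_sub_const_sq (hA j), hvar, hmean]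

end SecondMoments

section ProductMeasure

variable {ι : Type*} [Fintype ι]

lemma covarianceMatrix_pi [DecidableEq ι] {μ : ι → Measure ℝ} [∀ i, IsProbabilityMeasure (μ i)]
    (hμ : ∀ i, MemLp id 2 (μ i)) :
    covarianceMatrix (fun y : ι → ℝ => y) (Measure.pi μ) = diagonal fun i => Var[id; μ i] := by
  ext i j
  rw [covarianceMatrix, of_apply]
  rcases eq_or_ne i j with rfl | hij
  · rw [diagonal_apply_eq, covariance_self (measurable_pi_apply i).aemeasurable]
    exact (measurePreserving_eval μ i).variance_fun_comp aemeasurable_id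
  · rw [diagonal_apply_ne _ hij]
    have hindep : iIndepFun (fun i (y : ι → ℝ) => y i) (Measure.pi μ) :=
      iIndepFun_pi (X := fun _ => id) fun _ => aemeasurable_id
    exact (hindep.indepFun hij).covariance_eq_zero
      ((hμ i).comp_measurePreserving (measurePreserving_eval μ i))
      ((hμ j).comp_measurePreserving (measurePreserving_eval μ j))

variable (m : ι → ℝ) (v : NNReal)

lemma memLp_eval_pi_gaussianReal (p : NNReal) (i : ι) :
    MemLp (fun y : ι → ℝ => y i) p (Measure.pi fun i => gaussianReal (m i) v) :=
  (memLp_id_gaussianReal p).comp_measurePreserving (measurePreserving_eval _ i)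

lemma integral_eval_pi_gaussianReal (i : ι) :
    ∫ y, y i ∂(Measure.pi fun i => gaussianReal (m i) v) = m i :=
  (integral_comp_eval (μ := fun i => gaussianReal (m i) v)
    aestronglyMeasurable_id).trans integral_id_gaussianReal

lemma covarianceMatrix_pi_gaussianReal [DecidableEq ι] :
    covarianceMatrix (fun y : ι → ℝ => y) (Measure.pi fun i => gaussianReal (m i) v)
      = (v : ℝ) • (1 : Matrix ι ι ℝ) := by
  rw [covarianceMatrix_pi fun i => memLp_id_gaussianReal 2, smul_one_eq_diagonal]
  simp only [variance_id_gaussianReal]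

end ProductMeasure

section Risk

variable {Ω ι κ : Type*} {mΩ : MeasurableSpace Ω} {P : Measure Ω} [IsProbabilityMeasure P]
  [Fintype ι] [DecidableEq ι] [Fintype κ] [DecidableEq κ]
  {Y : Ω → ι → ℝ} {Φ : Matrix ι κ ℝ} {θ0 : κ → ℝ} {R : ι → ℝ}

lemma integral_sum_sq_leastSquares_sub {v : ℝ} (hΦ : IsUnit (Φᵀ * Φ))
    (hY : ∀ i, MemLp (fun ω => Y ω i) 2 P) (hmean : ∀ i, ∫ ω, Y ω i ∂P = (Φ *ᵥ θ0 + R) i)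
    (hcov : covarianceMatrix Y P = v • (1 : Matrix ι ι ℝ)) :
    ∫ ω, ∑ j, ((leastSquares Φ *ᵥ Y ω) j - θ0 j) ^ 2 ∂P
      = v * (Φᵀ * Φ)⁻¹.trace + ∑ j, (leastSquares Φ *ᵥ R) j ^ 2 := by
  have hbias : leastSquares Φ *ᵥ (Φ *ᵥ θ0 + R) = θ0 + leastSquares Φ *ᵥ R := by
    rw [mulVec_add, mulVec_mulVec, leastSquares_mul_self hΦ, one_mulVec]
  have hvar : leastSquares Φ * covarianceMatrix Y P * (leastSquares Φ)ᵀ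
      = v • (Φᵀ * Φ)⁻¹ := by
    rw [hcov, Matrix.mul_smul, Matrix.mul_one, Matrix.smul_mul, leastSquares_mul_transpose hΦ]
  rw [integral_sum_sq_mulVec_sub hY, funext hmean, hbias, hvar, trace_smul, smul_eq_mul]
  simp only [Pi.add_apply, add_sub_cancel_left]

open scoped Matrix.Norms.L2Operator in
theorem stmt3_general {v : NNReal} {c r : ℝ} (hr : r < c)
    (hΦ : ‖Φᵀ * Φ - c • (1 : Matrix κ κ ℝ)‖ ≤ r)
    (hY : ∀ i, MemLp (fun ω => Y ω i) 2 P) (hmean : ∀ i, ∫ ω, Y ω i ∂P = (Φ *ᵥ θ0 + R) i)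
    (hcov : covarianceMatrix Y P = (v : ℝ) • (1 : Matrix ι ι ℝ)) :
    ∫ ω, ∑ j, ((leastSquares Φ *ᵥ Y ω) j - θ0 j) ^ 2 ∂P
      ≤ (v * Fintype.card κ + ∑ i, R i ^ 2) / (c - r) := by
  have hc : ‖c‖ = c := Real.norm_of_nonneg ((norm_nonneg _).trans (hΦ.trans hr.le))
  have hunit : IsUnit (Φᵀ * Φ) :=
    isUnit_of_l2_opNorm_sub_smul_one_lt (hΦ.trans_lt (hr.trans_eq hc.symm))
  have hinv : ‖(Φᵀ * Φ)⁻¹‖ ≤ 1 / (c - r) := by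
    simpa only [hc] using l2_opNorm_inv_le hΦ (hr.trans_eq hc.symm)
  calc ∫ ω, ∑ j, ((leastSquares Φ *ᵥ Y ω) j - θ0 j) ^ 2 ∂P
      = v * (Φᵀ * Φ)⁻¹.trace + ∑ j, (leastSquares Φ *ᵥ R) j ^ 2 :=
        integral_sum_sq_leastSquares_sub hunit hY hmean hcov
    _ ≤ v * (Fintype.card κ * ‖(Φᵀ * Φ)⁻¹‖) + ‖(Φᵀ * Φ)⁻¹‖ * ∑ i, R i ^ 2 := by
        gcongr
        · exact (Real.le_norm_self _).trans (norm_trace_le_card_mul_l2_opNorm _)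
        · simpa only [Real.norm_eq_abs, sq_abs, sq_l2_opNorm_leastSquares hunit] using
            sum_norm_sq_mulVec_le (leastSquares Φ) R
    _ = (v * Fintype.card κ + ∑ i, R i ^ 2) * ‖(Φᵀ * Φ)⁻¹‖ := by ring
    _ ≤ (v * Fintype.card κ + ∑ i, R i ^ 2) * (1 / (c - r)) := by gcongr
    _ = (v * Fintype.card κ + ∑ i, R i ^ 2) / (c - r) := mul_one_div _ _

end Risk

/-- For `Y ~ N(Φθ₀ + R, σ²Iₙ)` and the least-squares estimator `θ_Y = (ΦᵀΦ)⁻¹ΦᵀY`, if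
`‖ΦᵀΦ − n Iₖ‖₂ < n/2` then `E‖θ_Y − θ₀‖² ≤ 2σ²k/n + 2‖R‖²/n`. -/
theorem stmt3 (n k : ℕ) (hn : 0 < n) (hk : 0 < k) (σ : ℝ) (hσ : 0 < σ)
    (Φ : Matrix (Fin n) (Fin k) ℝ)
    (hΦ : opNorm (Φᵀ * Φ - (n : ℝ) • (1 : Matrix (Fin k) (Fin k) ℝ)) < n / 2)
    (θ0 : Fin k → ℝ) (R : Fin n → ℝ) :
    (∫ y : Fin n → ℝ, (∑ j : Fin k, (((Φᵀ * Φ)⁻¹ * Φᵀ).mulVec y j - θ0 j) ^ 2)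
        ∂(Measure.pi fun i => gaussianReal ((Φ.mulVec θ0 + R) i) (σ ^ 2).toNNReal))
      ≤ 2 * σ ^ 2 * k / n + 2 * (∑ i, R i ^ 2) / n := by
  refine (stmt3_general (half_lt_self (Nat.cast_pos.mpr hn)) hΦ.le
    (memLp_eval_pi_gaussianReal _ _ 2) (integral_eval_pi_gaussianReal _ _)
    (covarianceMatrix_pi_gaussianReal _ _)).trans_eq ?_
  rw [Real.coe_toNNReal _ (sq_nonneg σ), Fintype.card_fin, sub_half]
  ring
end

section
/- There exists a universal constant C > 0 such that the following holds. Let n, k be positive integers, σ > 0, Φ a real n×k matrix with ‖ΦᵀΦ − n·I_k‖₂ < n/2, Λ = diag(λ₁, …, λ_k) with λ_j > 4/n for each j, θ₀ ∈ ℝ^k and R ∈ ℝⁿ. Let Y ~ N(Φθ₀ + R, σ²·Iₙ), θ_Y = (ΦᵀΦ)⁻¹ Φᵀ Y, and θ̃ = (ΦᵀΦ + Λ⁻¹)⁻¹ Φᵀ Y. Then E‖θ̃ − θ_Y‖² ≤ C·( ‖R‖²/n + ‖Λ^{-1/2}θ₀‖²/n + σ²k/n ). -/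
/-!
Write `M` for the difference of the ridge and the least squares matrices, with penalty `D`, and
`G = ΦᵀΦ`. Subtracting the two normal equations gives `G (M y) = -D θ̃`, where `θ̃` is the ridge
estimate, and hence two bounds for `w = M y`: on arbitrary data `⟪w, G w⟫ ≤ ‖y‖²`, and on exact data
`y = Φ θ` also `⟪w, G w⟫ ≤ ⟪θ, D θ⟫ / 4`. If `a ≤ G` in the Loewner order, they control the two
parts of the bias, and the first one also says `‖M‖² ≤ 1 / a`, which bounds the variance `σ² ‖M‖_F²`
by `σ² k / a`. The operator norm hypothesis provides `a = n / 2`.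
-/

open MeasureTheory ProbabilityTheory Matrix

open scoped NNReal

section Matrix

variable {m κ : Type*} [Fintype m] [Fintype κ]

lemma dotProduct_self_add_le (x y : κ → ℝ) :
    (x + y) ⬝ᵥ (x + y) ≤ 2 * (x ⬝ᵥ x) + 2 * (y ⬝ᵥ y) := by
  have h : 0 ≤ (x - y) ⬝ᵥ (x - y) := dotProduct_star_self_nonneg (x - y)
  simp only [sub_dotProduct, dotProduct_sub, add_dotProduct, dotProduct_add] at h ⊢
  linarith

lemma dotProduct_gram_mulVec (Φ : Matrix m κ ℝ) (u w : κ → ℝ) :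
    u ⬝ᵥ (Φᵀ * Φ) *ᵥ w = (Φ *ᵥ u) ⬝ᵥ (Φ *ᵥ w) := by
  rw [← mulVec_mulVec, dotProduct_mulVec, vecMul_transpose]

lemma posDef_gram_of_forall_le {Φ : Matrix m κ ℝ} {a : ℝ} (ha : 0 < a)
    (hΦ : ∀ w, a * (w ⬝ᵥ w) ≤ w ⬝ᵥ (Φᵀ * Φ) *ᵥ w) : (Φᵀ * Φ).PosDef :=
  .of_dotProduct_mulVec_pos (isHermitian_conjTranspose_mul_self Φ) fun w hw =>
    (mul_pos ha (dotProduct_star_self_pos_iff.2 hw)).trans_le (hΦ w)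

lemma neg_dotProduct_mulVec_add_le {D : Matrix κ κ ℝ} (hD : D.PosSemidef) (w θ : κ → ℝ) :
    -(w ⬝ᵥ D *ᵥ (w + θ)) ≤ (θ ⬝ᵥ D *ᵥ θ) / 4 := by
  have hsymm : θ ⬝ᵥ D *ᵥ w = w ⬝ᵥ D *ᵥ θ := by
    have hT : Dᵀ = D := hD.isHermitian
    rw [dotProduct_mulVec, dotProduct_comm, ← mulVec_transpose, hT]
  -- Completing the square: four times the difference of the two sides is this quadratic form.
  have h : 0 ≤ ((2 : ℝ) • w + θ) ⬝ᵥ D *ᵥ ((2 : ℝ) • w + θ) := hD.dotProduct_mulVec_nonneg _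
  simp only [mulVec_add, mulVec_smul, add_dotProduct, dotProduct_add, smul_dotProduct,
    dotProduct_smul, smul_eq_mul, hsymm] at h ⊢
  linarith

lemma sum_dotProduct_row_self_le {M : Matrix κ m ℝ} {c : ℝ} (hc : 0 ≤ c)
    (hM : ∀ y, (M *ᵥ y) ⬝ᵥ (M *ᵥ y) ≤ c * (y ⬝ᵥ y)) :
    ∑ j, M j ⬝ᵥ M j ≤ Fintype.card κ * c := by
  have hrow (j : κ) : M j ⬝ᵥ M j ≤ c := by
    have hsq : (M j ⬝ᵥ M j) * (M j ⬝ᵥ M j) ≤ c * (M j ⬝ᵥ M j) :=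
      (Finset.single_le_sum (f := fun i => (M *ᵥ M j) i * (M *ᵥ M j) i)
        (fun i _ => mul_self_nonneg _) (Finset.mem_univ j)).trans (hM (M j))
    by_contra! hlt
    exact hsq.not_gt (mul_lt_mul_of_pos_right hlt (hc.trans_lt hlt))
  simpa using Finset.sum_le_sum fun j (_ : j ∈ Finset.univ) => hrow j

lemma sub_mul_dotProduct_le_of_opNorm_le {k : ℕ} {A : Matrix (Fin k) (Fin k) ℝ} {c r : ℝ}
    (hA : opNorm (A - c • (1 : Matrix (Fin k) (Fin k) ℝ)) ≤ r) (w : Fin k → ℝ) :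
    (c - r) * (w ⬝ᵥ w) ≤ w ⬝ᵥ A *ᵥ w := by
  set E := A - c • (1 : Matrix (Fin k) (Fin k) ℝ) with hE
  set x : EuclideanSpace ℝ (Fin k) := WithLp.toLp 2 w
  have hquad : w ⬝ᵥ E *ᵥ w = w ⬝ᵥ A *ᵥ w - c * (w ⬝ᵥ w) := by
    rw [hE, sub_mulVec, dotProduct_sub, smul_mulVec, one_mulVec, dotProduct_smul, smul_eq_mul]
  have hnorm : ‖x‖ * ‖x‖ = w ⬝ᵥ w := (real_inner_self_eq_norm_mul_norm x).symm
  have hlower : -(r * (w ⬝ᵥ w)) ≤ w ⬝ᵥ E *ᵥ w := by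
    rw [← inner_toEuclideanCLM E x x]
    refine neg_le_of_abs_le ((abs_real_inner_le_norm _ _).trans ?_)
    calc ‖x‖ * ‖toEuclideanCLM (𝕜 := ℝ) E x‖ ≤ ‖x‖ * (r * ‖x‖) := by
          gcongr
          exact ContinuousLinearMap.le_of_opNorm_le _ hA x
      _ = r * (w ⬝ᵥ w) := by rw [← hnorm]; ring
  linarith

lemma dotProduct_inv_diagonal_mulVec [DecidableEq κ] {d : κ → ℝ} (hd : ∀ j, d j ≠ 0)
    (θ : κ → ℝ) : θ ⬝ᵥ (diagonal d)⁻¹ *ᵥ θ = ∑ j, θ j ^ 2 / d j := by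
  have hinv : (diagonal d)⁻¹ = diagonal fun j => (d j)⁻¹ := by
    refine inv_eq_right_inv ?_
    simp [diagonal_mul_diagonal, hd]
  refine Finset.sum_congr rfl fun j _ => ?_
  rw [hinv, mulVec_diagonal]
  ring

end Matrix

section Ridge

variable {m κ : Type*} [Fintype m] [Fintype κ] [DecidableEq κ]

/-- The matrix of the ridge estimator with penalty `θ ↦ ⟪θ, D θ⟫`, i.e. of the map sending the data
`y` to the minimiser of `‖y - Φ θ‖² + ⟪θ, D θ⟫`. -/
noncomputable def ridgeMatrix (Φ : Matrix m κ ℝ) (D : Matrix κ κ ℝ) : Matrix κ m ℝ :=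
  (Φᵀ * Φ + D)⁻¹ * Φᵀ

/-- The matrix of the least squares estimator, for a design matrix `Φ` of full column rank. -/
noncomputable def leastSquaresMatrix (Φ : Matrix m κ ℝ) : Matrix κ m ℝ :=
  (Φᵀ * Φ)⁻¹ * Φᵀ

/-- The matrix `M` sending the data to the displacement of the least squares estimate that is caused
by the ridge penalty. -/
noncomputable def shrinkageMatrix (Φ : Matrix m κ ℝ) (D : Matrix κ κ ℝ) : Matrix κ m ℝ :=
  ridgeMatrix Φ D - leastSquaresMatrix Φ

variable {Φ : Matrix m κ ℝ} {D : Matrix κ κ ℝ}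

lemma gram_add_mulVec_ridgeMatrix_mulVec (h : IsUnit (Φᵀ * Φ + D)) (y : m → ℝ) :
    (Φᵀ * Φ + D) *ᵥ ridgeMatrix Φ D *ᵥ y = Φᵀ *ᵥ y := by
  rw [ridgeMatrix, mulVec_mulVec,
    mul_nonsing_inv_cancel_left _ _ ((isUnit_iff_isUnit_det _).1 h)]

lemma gram_mulVec_leastSquaresMatrix_mulVec (h : IsUnit (Φᵀ * Φ)) (y : m → ℝ) :
    (Φᵀ * Φ) *ᵥ leastSquaresMatrix Φ *ᵥ y = Φᵀ *ᵥ y := by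
  rw [leastSquaresMatrix, mulVec_mulVec,
    mul_nonsing_inv_cancel_left _ _ ((isUnit_iff_isUnit_det _).1 h)]

lemma leastSquaresMatrix_mulVec_mulVec (h : IsUnit (Φᵀ * Φ)) (θ : κ → ℝ) :
    leastSquaresMatrix Φ *ᵥ Φ *ᵥ θ = θ := by
  rw [leastSquaresMatrix, mulVec_mulVec, Matrix.mul_assoc,
    nonsing_inv_mul _ ((isUnit_iff_isUnit_det _).1 h), one_mulVec]

lemma gram_mulVec_shrinkageMatrix_mulVec (hG : (Φᵀ * Φ).PosDef) (hD : D.PosSemidef) (y : m → ℝ) :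
    (Φᵀ * Φ) *ᵥ shrinkageMatrix Φ D *ᵥ y = -(D *ᵥ ridgeMatrix Φ D *ᵥ y) := by
  have hridge := gram_add_mulVec_ridgeMatrix_mulVec (hG.add_posSemidef hD).isUnit y
  rw [shrinkageMatrix, sub_mulVec, mulVec_sub, gram_mulVec_leastSquaresMatrix_mulVec hG.isUnit,
    ← hridge, add_mulVec]
  abel

lemma dotProduct_gram_mulVec_shrinkageMatrix_le (hG : (Φᵀ * Φ).PosDef) (hD : D.PosSemidef)
    (y : m → ℝ) :
    (shrinkageMatrix Φ D *ᵥ y) ⬝ᵥ (Φᵀ * Φ) *ᵥ shrinkageMatrix Φ D *ᵥ y ≤ y ⬝ᵥ y := by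
  set w := shrinkageMatrix Φ D *ᵥ y with hw
  set v := ridgeMatrix Φ D *ᵥ y
  set β := leastSquaresMatrix Φ *ᵥ y with hβ
  have hvβ : w = v - β := by rw [hw, shrinkageMatrix, sub_mulVec]
  have hridge : v ⬝ᵥ (Φᵀ * Φ) *ᵥ w ≤ 0 := by
    rw [hw, gram_mulVec_shrinkageMatrix_mulVec hG hD, dotProduct_neg, neg_nonpos]
    exact hD.dotProduct_mulVec_nonneg v
  have hls : β ⬝ᵥ (Φᵀ * Φ) *ᵥ w = y ⬝ᵥ Φ *ᵥ w := by
    rw [dotProduct_gram_mulVec, dotProduct_comm, ← dotProduct_gram_mulVec, hβ,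
      gram_mulVec_leastSquaresMatrix_mulVec hG.isUnit, dotProduct_mulVec, vecMul_transpose,
      dotProduct_comm]
  have hform : w ⬝ᵥ (Φᵀ * Φ) *ᵥ w ≤ -(y ⬝ᵥ Φ *ᵥ w) := by
    nth_rw 1 [hvβ]
    rw [sub_dotProduct, hls]
    linarith
  have hsq : 0 ≤ (y + Φ *ᵥ w) ⬝ᵥ (y + Φ *ᵥ w) := dotProduct_star_self_nonneg _
  rw [add_dotProduct, dotProduct_add, dotProduct_add, dotProduct_comm (Φ *ᵥ w) y,
    ← dotProduct_gram_mulVec] at hsq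
  linarith

lemma dotProduct_gram_mulVec_shrinkageMatrix_mulVec_le (hG : (Φᵀ * Φ).PosDef) (hD : D.PosSemidef)
    (θ : κ → ℝ) :
    (shrinkageMatrix Φ D *ᵥ Φ *ᵥ θ) ⬝ᵥ (Φᵀ * Φ) *ᵥ shrinkageMatrix Φ D *ᵥ Φ *ᵥ θ ≤
      (θ ⬝ᵥ D *ᵥ θ) / 4 := by
  have hridge : ridgeMatrix Φ D *ᵥ Φ *ᵥ θ = shrinkageMatrix Φ D *ᵥ Φ *ᵥ θ + θ := by
    rw [shrinkageMatrix, sub_mulVec, leastSquaresMatrix_mulVec_mulVec hG.isUnit, sub_add_cancel]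
  rw [gram_mulVec_shrinkageMatrix_mulVec hG hD, hridge, dotProduct_neg]
  exact neg_dotProduct_mulVec_add_le hD _ θ

variable {a : ℝ}

lemma shrinkageMatrix_mulVec_dotProduct_self_le (ha : 0 < a)
    (hΦ : ∀ w, a * (w ⬝ᵥ w) ≤ w ⬝ᵥ (Φᵀ * Φ) *ᵥ w) (hD : D.PosSemidef) (y : m → ℝ) :
    (shrinkageMatrix Φ D *ᵥ y) ⬝ᵥ (shrinkageMatrix Φ D *ᵥ y) ≤ a⁻¹ * (y ⬝ᵥ y) :=
  (le_inv_mul_iff₀ ha).2 <|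
    (hΦ _).trans (dotProduct_gram_mulVec_shrinkageMatrix_le (posDef_gram_of_forall_le ha hΦ) hD y)

lemma shrinkageMatrix_mulVec_add_dotProduct_self_le (ha : 0 < a)
    (hΦ : ∀ w, a * (w ⬝ᵥ w) ≤ w ⬝ᵥ (Φᵀ * Φ) *ᵥ w) (hD : D.PosSemidef) (θ : κ → ℝ) (R : m → ℝ) :
    (shrinkageMatrix Φ D *ᵥ (Φ *ᵥ θ + R)) ⬝ᵥ (shrinkageMatrix Φ D *ᵥ (Φ *ᵥ θ + R)) ≤
      2 * (a⁻¹ * ((θ ⬝ᵥ D *ᵥ θ) / 4)) + 2 * (a⁻¹ * (R ⬝ᵥ R)) := by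
  rw [mulVec_add]
  refine (dotProduct_self_add_le _ _).trans ?_
  gcongr
  · exact (le_inv_mul_iff₀ ha).2 <|
      (hΦ _).trans <|
        dotProduct_gram_mulVec_shrinkageMatrix_mulVec_le (posDef_gram_of_forall_le ha hΦ) hD θ
  · exact shrinkageMatrix_mulVec_dotProduct_self_le ha hΦ hD R

end Ridge

section GaussMarkov

variable {Ω ι κ : Type*} {mΩ : MeasurableSpace Ω} {P : Measure Ω} {Y : Ω → ι → ℝ} {μ : ι → ℝ}
  {v : ℝ≥0}

/-- The Gauss–Markov conditions on a random vector `Y`: its coordinates are square integrable, its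
mean is `μ`, and its covariance matrix is `v • 1`. They determine the mean square of every linear
statistic `M Y`. -/
structure GaussMarkov (Y : Ω → ι → ℝ) (μ : ι → ℝ) (v : ℝ≥0) (P : Measure Ω) : Prop where
  memLp (i : ι) : MemLp (fun ω => Y ω i) 2 P
  integral_eq (i : ι) : ∫ ω, Y ω i ∂P = μ i
  variance_eq (i : ι) : Var[fun ω => Y ω i; P] = v
  covariance_eq_zero : Pairwise fun i j => cov[fun ω => Y ω i, fun ω => Y ω j; P] = 0

variable [Fintype ι]

lemma gaussMarkov_pi {ν : ι → Measure ℝ} [∀ i, IsProbabilityMeasure (ν i)]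
    (hmem : ∀ i, MemLp (fun t => t) 2 (ν i)) (hmean : ∀ i, ∫ t, t ∂ν i = μ i)
    (hvar : ∀ i, Var[fun t => t; ν i] = v) :
    GaussMarkov (fun y => y) μ v (Measure.pi ν) := by
  have hmem' (i : ι) : MemLp (fun y : ι → ℝ => y i) 2 (Measure.pi ν) :=
    (hmem i).comp_measurePreserving (measurePreserving_eval ν i)
  refine ⟨hmem', fun i => ?_, fun i => ?_, fun i j hij => ?_⟩
  · exact (integral_comp_eval (hmem i).aestronglyMeasurable).trans (hmean i)
  · exact ((measurePreserving_eval ν i).variance_fun_comp aemeasurable_id).trans (hvar i)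
  · have hindep := iIndepFun_pi (μ := ν) (X := fun _ t => t) fun _ => aemeasurable_id
    exact (hindep.indepFun hij).covariance_eq_zero (hmem' i) (hmem' j)

lemma gaussMarkov_pi_gaussianReal (μ : ι → ℝ) (v : ℝ≥0) :
    GaussMarkov (fun y => y) μ v (Measure.pi fun i => gaussianReal (μ i) v) :=
  gaussMarkov_pi (fun _ => memLp_id_gaussianReal 2) (fun _ => integral_id_gaussianReal)
    fun _ => variance_fun_id_gaussianReal

namespace GaussMarkov

lemma memLp_dotProduct (h : GaussMarkov Y μ v P) (c : ι → ℝ) : MemLp (fun ω => c ⬝ᵥ Y ω) 2 P :=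
  memLp_finsetSum _ fun i _ => (h.memLp i).const_mul (c i)

variable [IsProbabilityMeasure P]

lemma integral_dotProduct (h : GaussMarkov Y μ v P) (c : ι → ℝ) :
    ∫ ω, c ⬝ᵥ Y ω ∂P = c ⬝ᵥ μ := by
  simp only [dotProduct]
  rw [integral_finsetSum _ fun i _ => ((h.memLp i).integrable one_le_two).const_mul (c i)]
  simp only [integral_const_mul, h.integral_eq]

lemma variance_dotProduct (h : GaussMarkov Y μ v P) (c : ι → ℝ) :
    Var[fun ω => c ⬝ᵥ Y ω; P] = v * (c ⬝ᵥ c) := by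
  have hdiag (i : ι) : cov[fun ω => Y ω i, fun ω => Y ω i; P] = v := by
    rw [covariance_self (h.memLp i).aemeasurable, h.variance_eq]
  simp only [dotProduct]
  rw [variance_fun_sum fun i => (h.memLp i).const_mul (c i), Finset.mul_sum]
  refine Finset.sum_congr rfl fun i _ => ?_
  simp only [covariance_const_mul_left, covariance_const_mul_right]
  rw [Finset.sum_eq_single_of_mem i (Finset.mem_univ i)
    fun j _ hji => by rw [h.covariance_eq_zero hji.symm, mul_zero, mul_zero], hdiag]
  ring

lemma integral_dotProduct_sq (h : GaussMarkov Y μ v P) (c : ι → ℝ) :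
    ∫ ω, (c ⬝ᵥ Y ω) ^ 2 ∂P = (c ⬝ᵥ μ) ^ 2 + v * (c ⬝ᵥ c) := by
  have hvar := variance_eq_sub (h.memLp_dotProduct c)
  rw [h.integral_dotProduct, h.variance_dotProduct] at hvar
  simp only [Pi.pow_apply] at hvar
  linarith

lemma integral_sum_mulVec_sq [Fintype κ] (h : GaussMarkov Y μ v P) (M : Matrix κ ι ℝ) :
    ∫ ω, ∑ j, (M *ᵥ Y ω) j ^ 2 ∂P = (M *ᵥ μ) ⬝ᵥ (M *ᵥ μ) + v * ∑ j, M j ⬝ᵥ M j := by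
  have hint (j : κ) : Integrable (fun ω => (M *ᵥ Y ω) j ^ 2) P :=
    (h.memLp_dotProduct (M j)).integrable_sq
  rw [integral_finsetSum _ fun j _ => hint j, Finset.mul_sum, dotProduct, ← Finset.sum_add_distrib]
  exact Finset.sum_congr rfl fun j _ => (h.integral_dotProduct_sq (M j)).trans (by rw [sq]; rfl)

end GaussMarkov

end GaussMarkov

theorem stmt4_general {Ω m κ : Type*} {mΩ : MeasurableSpace Ω} {P : Measure Ω}
    [IsProbabilityMeasure P] [Fintype m] [Fintype κ] [DecidableEq κ]
    {Φ : Matrix m κ ℝ} {D : Matrix κ κ ℝ} {a : ℝ} (ha : 0 < a)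
    (hΦ : ∀ w, a * (w ⬝ᵥ w) ≤ w ⬝ᵥ (Φᵀ * Φ) *ᵥ w) (hD : D.PosSemidef)
    {Y : Ω → m → ℝ} {θ : κ → ℝ} {R : m → ℝ} {v : ℝ≥0} (hY : GaussMarkov Y (Φ *ᵥ θ + R) v P) :
    ∫ ω, ∑ j, ((ridgeMatrix Φ D *ᵥ Y ω) j - (leastSquaresMatrix Φ *ᵥ Y ω) j) ^ 2 ∂P ≤
      2 * ((∑ i, R i ^ 2) / a + (θ ⬝ᵥ D *ᵥ θ) / a + v * Fintype.card κ / a) := by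
  have hθ : 0 ≤ θ ⬝ᵥ D *ᵥ θ := hD.dotProduct_mulVec_nonneg θ
  have hbias := shrinkageMatrix_mulVec_add_dotProduct_self_le ha hΦ hD θ R
  have hnoise := sum_dotProduct_row_self_le (inv_nonneg.2 ha.le)
    (shrinkageMatrix_mulVec_dotProduct_self_le ha hΦ hD)
  calc ∫ ω, ∑ j, ((ridgeMatrix Φ D *ᵥ Y ω) j - (leastSquaresMatrix Φ *ᵥ Y ω) j) ^ 2 ∂P
      = ∫ ω, ∑ j, (shrinkageMatrix Φ D *ᵥ Y ω) j ^ 2 ∂P := by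
        simp only [shrinkageMatrix, sub_mulVec, Pi.sub_apply]
    _ ≤ 2 * (a⁻¹ * ((θ ⬝ᵥ D *ᵥ θ) / 4)) + 2 * (a⁻¹ * (R ⬝ᵥ R)) + v * (Fintype.card κ * a⁻¹) := by
        rw [hY.integral_sum_mulVec_sq]
        gcongr
    _ = 2 * ((∑ i, R i ^ 2) / a) + 1 / 2 * ((θ ⬝ᵥ D *ᵥ θ) / a) + v * Fintype.card κ / a := by
        simp only [dotProduct, sq]
        ring
    _ ≤ 2 * ((∑ i, R i ^ 2) / a + (θ ⬝ᵥ D *ᵥ θ) / a + v * Fintype.card κ / a) := by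
        have hθa : 0 ≤ (θ ⬝ᵥ D *ᵥ θ) / a := by positivity
        have hva : 0 ≤ v * Fintype.card κ / a := by positivity
        linarith

/-- There is a universal constant `C > 0` such that for `Y ~ N(Φθ₀ + R, σ²Iₙ)`,
`θ_Y = (ΦᵀΦ)⁻¹ΦᵀY` and the ridge-type estimator `θ̃ = (ΦᵀΦ + Λ⁻¹)⁻¹ΦᵀY` with
`Λ = diag(λ₁,…,λₖ)`, `λⱼ > 4/n`, if `‖ΦᵀΦ − n Iₖ‖₂ < n/2` then
`E‖θ̃ − θ_Y‖² ≤ C (‖R‖²/n + ‖Λ^{-1/2}θ₀‖²/n + σ²k/n)`. -/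
theorem stmt4 :
    ∃ C : ℝ, 0 < C ∧
      ∀ (n k : ℕ) (_hn : 0 < n) (_hk : 0 < k) (σ : ℝ) (_hσ : 0 < σ)
        (Φ : Matrix (Fin n) (Fin k) ℝ)
        (_hΦ : opNorm (Φᵀ * Φ - (n : ℝ) • (1 : Matrix (Fin k) (Fin k) ℝ)) < n / 2)
        (lam : Fin k → ℝ) (_hlam : ∀ j, 4 / (n : ℝ) < lam j)
        (θ0 : Fin k → ℝ) (R : Fin n → ℝ),
        (∫ y : Fin n → ℝ,
            (∑ j : Fin k,
              (((Φᵀ * Φ + (Matrix.diagonal lam)⁻¹)⁻¹ * Φᵀ).mulVec y j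
                - ((Φᵀ * Φ)⁻¹ * Φᵀ).mulVec y j) ^ 2)
            ∂(Measure.pi fun i => gaussianReal ((Φ.mulVec θ0 + R) i) (σ ^ 2).toNNReal))
          ≤ C * ((∑ i, R i ^ 2) / n + (∑ j, θ0 j ^ 2 / lam j) / n + σ ^ 2 * k / n) := by
  refine ⟨4, four_pos, fun n k hn _ σ _ Φ hΦ lam hlam θ R => ?_⟩
  have hn' : (0 : ℝ) < n := Nat.cast_pos.2 hn
  have hlam0 (j : Fin k) : 0 < lam j := (div_pos four_pos hn').trans (hlam j)
  refine (stmt4_general (sub_pos.2 (half_lt_self hn')) (sub_mul_dotProduct_le_of_opNorm_le hΦ.le)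
    (posDef_diagonal_iff.2 hlam0).inv.posSemidef (gaussMarkov_pi_gaussianReal _ _)).trans_eq ?_
  rw [dotProduct_inv_diagonal_mulVec (fun j => (hlam0 j).ne'), Real.coe_toNNReal _ (sq_nonneg σ),
    Fintype.card_fin]
  ring
end

section
/- There exist universal constants C > 0 and v₀ ≥ e such that the following holds. Let v ≥ v₀ and let G be an integrable real random variable satisfying E G ≥ −v/2 and, for every t ∈ (0, 1/2), E e^{2tG} ≤ exp( 2t·E G + 2t²·v ). Then P( G ≤ −v ) ≤ C · log(v)/√v. -/
open MeasureTheory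

/-!
Upper exponential moments control the lower tail through the mean: the random variable
`exp (s * X) / s - X` is nonnegative because `x ≤ exp x`, and it exceeds `a` wherever `X ≤ -a`.
Markov's inequality therefore bounds `a * P(X ≤ -a)` by `E[exp (s * X)] / s - E[X]`. For the centred
variable `X = G - E[G]` with `a = v / 2` and `s = 1 / √v`, the right-hand side is at most
`exp (1 / 2) * √v`, so the tail is of order `1 / √v`, even without the factor `log v`.
-/

section

open ProbabilityTheory

variable {Ω : Type*} [MeasurableSpace Ω] {μ : Measure Ω}

lemma integrable_of_lintegral_ofReal_le {f : Ω → ℝ} {c : ℝ} (hfm : AEStronglyMeasurable f μ)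
    (hf : 0 ≤ᵐ[μ] f) (hle : ∫⁻ ω, ENNReal.ofReal (f ω) ∂μ ≤ ENNReal.ofReal c) :
    Integrable f μ :=
  (lintegral_ofReal_ne_top_iff_integrable hfm hf).mp
    (ne_top_of_le_ne_top ENNReal.ofReal_ne_top hle)

lemma integral_le_of_lintegral_ofReal_le {f : Ω → ℝ} {c : ℝ} (hfm : AEStronglyMeasurable f μ)
    (hf : 0 ≤ᵐ[μ] f) (hc : 0 ≤ c)
    (hle : ∫⁻ ω, ENNReal.ofReal (f ω) ∂μ ≤ ENNReal.ofReal c) :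
    ∫ ω, f ω ∂μ ≤ c := by
  rw [integral_eq_lintegral_of_nonneg_ae hf hfm]
  exact ENNReal.toReal_le_of_le_ofReal hc hle

variable {X : Ω → ℝ} {s : ℝ}

lemma mul_measureReal_le_neg_le_mgf_div_sub_integral [IsFiniteMeasure μ] (hs : 0 < s)
    (hX : Integrable X μ) (hexp : Integrable (fun ω ↦ Real.exp (s * X ω)) μ)
    {a : ℝ} (ha : 0 ≤ a) :
    a * μ.real {ω | X ω ≤ -a} ≤ mgf X μ s / s - μ[X] := by
  have hint : Integrable (fun ω ↦ Real.exp (s * X ω) / s - X ω) μ := (hexp.div_const s).sub hX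
  have hnonneg (ω : Ω) : 0 ≤ Real.exp (s * X ω) / s - X ω := by
    rw [sub_nonneg, le_div_iff₀ hs]
    linarith [Real.add_one_le_exp (s * X ω)]
  have hsub : {ω | X ω ≤ -a} ⊆ {ω | a ≤ Real.exp (s * X ω) / s - X ω} := fun ω (hω : X ω ≤ -a) ↦
    show a ≤ _ by linarith [div_pos (Real.exp_pos (s * X ω)) hs]
  calc a * μ.real {ω | X ω ≤ -a}
      ≤ a * μ.real {ω | a ≤ Real.exp (s * X ω) / s - X ω} :=
        mul_le_mul_of_nonneg_left (measureReal_mono hsub) ha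
    _ ≤ ∫ ω, (Real.exp (s * X ω) / s - X ω) ∂μ :=
        mul_meas_ge_le_integral_of_nonneg (.of_forall hnonneg) hint a
    _ = mgf X μ s / s - μ[X] := by
        rw [integral_sub (hexp.div_const s) hX, integral_div, mgf]

variable [IsProbabilityMeasure μ]

lemma mul_measureReal_le_integral_sub_le_mgf_mul_exp_div (hs : 0 < s) (hX : Integrable X μ)
    (hexp : Integrable (fun ω ↦ Real.exp (s * X ω)) μ) {a : ℝ} (ha : 0 ≤ a) :
    a * μ.real {ω | X ω ≤ μ[X] - a} ≤ mgf X μ s * Real.exp (-(s * μ[X])) / s := by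
  set m := μ[X] with hm
  have hX_centred : Integrable (fun ω ↦ X ω + -m) μ := hX.add (integrable_const _)
  have hmean_centred : ∫ ω, (X ω + -m) ∂μ = 0 := by
    rw [integral_add hX (integrable_const _), integral_const, probReal_univ, one_smul, ← hm,
      add_neg_cancel]
  have hexp_centred : Integrable (fun ω ↦ Real.exp (s * (X ω + -m))) μ := by
    simpa only [mul_add, Real.exp_add] using hexp.mul_const (Real.exp (s * -m))
  have htail := mul_measureReal_le_neg_le_mgf_div_sub_integral hs hX_centred hexp_centred ha
  rw [hmean_centred, sub_zero, mgf_add_const, mul_neg] at htail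
  simpa only [← sub_eq_add_neg, sub_le_iff_le_add, neg_add_eq_sub] using htail

theorem stmt9_general {G : Ω → ℝ} (hG : Integrable G μ) {v : ℝ} (hv : 0 < v)
    (hmean : -v / 2 ≤ ∫ ω, G ω ∂μ)
    (hmgf : ∫⁻ ω, ENNReal.ofReal (Real.exp (1 / √v * G ω)) ∂μ
      ≤ ENNReal.ofReal (Real.exp (1 / √v * (∫ ω, G ω ∂μ) + 1 / 2))) :
    μ {ω | G ω ≤ -v} ≤ ENNReal.ofReal (2 * Real.exp (1 / 2) / √v) := by
  set m := ∫ ω, G ω ∂μ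
  have hmeas : AEStronglyMeasurable (fun ω ↦ Real.exp (1 / √v * G ω)) μ :=
    Real.continuous_exp.comp_aestronglyMeasurable (hG.1.const_mul _)
  have hnonneg : 0 ≤ᵐ[μ] fun ω ↦ Real.exp (1 / √v * G ω) :=
    .of_forall fun _ ↦ (Real.exp_pos _).le
  have hexp := integrable_of_lintegral_ofReal_le hmeas hnonneg hmgf
  have hmgf_le : mgf G μ (1 / √v) ≤ Real.exp (1 / √v * m + 1 / 2) :=
    integral_le_of_lintegral_ofReal_le hmeas hnonneg (Real.exp_pos _).le hmgf
  have htail : v / 2 * μ.real {ω | G ω ≤ m - v / 2} ≤ Real.exp (1 / 2) * √v := calc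
    _ ≤ mgf G μ (1 / √v) * Real.exp (-(1 / √v * m)) / (1 / √v) :=
        mul_measureReal_le_integral_sub_le_mgf_mul_exp_div (by positivity) hG hexp (by positivity)
    _ ≤ Real.exp (1 / √v * m + 1 / 2) * Real.exp (-(1 / √v * m)) / (1 / √v) := by gcongr
    _ = Real.exp (1 / 2) * √v := by
        rw [← Real.exp_add, add_neg_cancel_comm, div_div_eq_mul_div, div_one]
  have hsub : {ω | G ω ≤ -v} ⊆ {ω | G ω ≤ m - v / 2} := fun ω (hω : G ω ≤ -v) ↦
    show G ω ≤ m - v / 2 by linarith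
  calc μ {ω | G ω ≤ -v} ≤ μ {ω | G ω ≤ m - v / 2} := measure_mono hsub
    _ = ENNReal.ofReal (μ.real {ω | G ω ≤ m - v / 2}) := by rw [ofReal_measureReal]
    _ ≤ ENNReal.ofReal (Real.exp (1 / 2) * √v / (v / 2)) :=
        ENNReal.ofReal_le_ofReal ((le_div_iff₀' (by positivity)).mpr htail)
    _ = ENNReal.ofReal (2 * Real.exp (1 / 2) / √v) := by
        congr 1
        field_simp
        rw [Real.sq_sqrt hv.le]

end

/-- There exist universal constants `C > 0` and `v₀ ≥ e` such that: if `G` is an integrable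
real random variable on a probability space with `E G ≥ −v/2` and moment generating function
bound `E e^{2tG} ≤ exp(2t·EG + 2t²v)` for all `t ∈ (0, 1/2)`, where `v ≥ v₀`, then
`P(G ≤ −v) ≤ C log(v)/√v`. -/
theorem stmt9 :
    ∃ C v₀ : ℝ, 0 < C ∧ Real.exp 1 ≤ v₀ ∧
      ∀ (Ω : Type) (_ : MeasurableSpace Ω) (μ : Measure Ω) (_ : IsProbabilityMeasure μ)
        (G : Ω → ℝ) (_hG : Integrable G μ) (v : ℝ) (_hv : v₀ ≤ v)
        (_hmean : -v / 2 ≤ ∫ ω, G ω ∂μ)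
        (_hmgf : ∀ t : ℝ, 0 < t → t < 1 / 2 →
          ∫⁻ ω, ENNReal.ofReal (Real.exp (2 * t * G ω)) ∂μ
            ≤ ENNReal.ofReal (Real.exp (2 * t * (∫ ω, G ω ∂μ) + 2 * t ^ 2 * v))),
        μ {ω | G ω ≤ -v} ≤ ENNReal.ofReal (C * Real.log v / Real.sqrt v) := by
  refine ⟨2 * Real.exp (1 / 2), Real.exp 1, by positivity, le_rfl,
    fun Ω _ μ _ G hG v hv hmean hmgf ↦ ?_⟩
  have hv_one : 1 < v := (Real.one_lt_exp_iff.mpr one_pos).trans_le hv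
  have hv_pos : 0 < v := one_pos.trans hv_one
  have hsqrt : 1 < √v := (Real.lt_sqrt zero_le_one).mpr (by rwa [one_pow])
  have hlog : 1 ≤ Real.log v := (Real.le_log_iff_exp_le hv_pos).mpr hv
  have hlinear : 2 * (1 / (2 * √v)) = 1 / √v := by field_simp
  have hquadratic : 2 * (1 / (2 * √v)) ^ 2 * v = 1 / 2 := by
    field_simp
    rw [Real.sq_sqrt hv_pos.le]
  have hmgf_sqrt := hmgf (1 / (2 * √v)) (by positivity) (by gcongr; linarith)
  rw [hlinear, hquadratic] at hmgf_sqrt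
  refine (stmt9_general hG hv_pos hmean hmgf_sqrt).trans (ENNReal.ofReal_le_ofReal ?_)
  exact div_le_div_of_nonneg_right (le_mul_of_one_le_right (by positivity) hlog) (by positivity)
end

section
/- Let j be a nonnegative integer and z a real number with z > 0 and z² > j. Then |H_j(z)| ≤ √2 · 2^j · z^j, where H_j is the j-th physicist's Hermite polynomial. -/
/-- The `j`-th physicist's Hermite polynomial, `H_j(x) = 2^{j/2}·he_j(√2 x)` where `he_j`
is the probabilist's Hermite polynomial. -/
noncomputable def physHermite (j : ℕ) (x : ℝ) : ℝ :=
  (2 : ℝ) ^ ((j : ℝ) / 2) * Polynomial.aeval (Real.sqrt 2 * x) (Polynomial.hermite j)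

/-!
Applying `p (n + 2) = y * p (n + 1) - c n * p n` twice gives
`p (n + 3) = (y ^ 2 - c (n + 1)) * p (n + 1) - c n * (y * p n)`. While
`0 ≤ c n ≤ c (n + 1) ≤ y ^ 2`, bounds `|p k| ≤ |y| ^ k` for `k = n, n + 1` therefore imply the
bound for `k = n + 3`, since `(y ^ 2 - c (n + 1)) + c n ≤ y ^ 2`. The probabilist's Hermite
polynomials satisfy this recurrence with the increasing coefficients `c n = n + 1`.
-/

section ThreeTermRecurrence

variable {R : Type*} [CommRing R] [LinearOrder R] [IsStrictOrderedRing R]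

theorem abs_sub_mul_sub_mul_le {s t u a b M : R} (hs : 0 ≤ s) (hst : s ≤ t) (htu : t ≤ u)
    (ha : |a| ≤ M) (hb : |b| ≤ M) : |(u - t) * a - s * b| ≤ u * M := by
  have hM : 0 ≤ M := (abs_nonneg a).trans ha
  have hut : 0 ≤ u - t := sub_nonneg.2 htu
  calc |(u - t) * a - s * b|
      ≤ |(u - t) * a| + |s * b| := abs_sub _ _
    _ = (u - t) * |a| + s * |b| := by
      rw [abs_mul, abs_of_nonneg hut, abs_mul, abs_of_nonneg hs]
    _ ≤ (u - t) * M + s * M := by gcongr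
    _ ≤ (u - t) * M + t * M := by gcongr
    _ = u * M := by ring

theorem abs_le_abs_pow_mul_of_recurrence {p c : ℕ → R} {y : R} (hp : p 1 = y * p 0)
    (hrec : ∀ n, p (n + 2) = y * p (n + 1) - c n * p n) (hc₀ : 0 ≤ c 0) (hc : Monotone c)
    (n : ℕ) (hcn : ∀ k, k + 2 ≤ n → c k ≤ y ^ 2) : |p n| ≤ |y| ^ n * |p 0| := by
  induction n using Nat.strong_induction_on with
  | _ n ih =>
    match n with
    | 0 => simp
    | 1 => simp [hp, abs_mul]
    | 2 =>
      calc |p 2| = |(y ^ 2 - c 0) * p 0 - 0 * 0| := by rw [hrec, hp]; ring_nf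
        _ ≤ y ^ 2 * |p 0| :=
          abs_sub_mul_sub_mul_le le_rfl hc₀ (hcn 0 le_rfl) le_rfl (by simp)
        _ = |y| ^ 2 * |p 0| := by rw [sq_abs]
    | n + 3 =>
      have hyp : |y * p n| ≤ |y| ^ (n + 1) * |p 0| := by
        rw [abs_mul, pow_succ', mul_assoc]
        gcongr
        exact ih n (by lia) fun k hk ↦ hcn k (by lia)
      have hp_succ : |p (n + 1)| ≤ |y| ^ (n + 1) * |p 0| :=
        ih (n + 1) (by lia) fun k hk ↦ hcn k (by lia)
      calc |p (n + 3)| = |(y ^ 2 - c (n + 1)) * p (n + 1) - c n * (y * p n)| := by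
            rw [hrec, hrec]; ring_nf
        _ ≤ y ^ 2 * (|y| ^ (n + 1) * |p 0|) :=
          abs_sub_mul_sub_mul_le (hc₀.trans (hc n.zero_le)) (hc n.le_succ)
            (hcn (n + 1) le_rfl) hp_succ hyp
        _ = |y| ^ (n + 3) * |p 0| := by rw [← sq_abs]; ring

end ThreeTermRecurrence

section Hermite

open Polynomial

theorem derivative_hermite_succ (n : ℕ) :
    derivative (hermite (n + 1)) = (n + 1 : ℤ[X]) * hermite n := by
  induction n with
  | zero => simp
  | succ n ih =>
    have hderiv : derivative (derivative (hermite (n + 1))) =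
        (n + 1 : ℤ[X]) * derivative (hermite n) := by
      rw [ih]
      simp
    rw [hermite_succ (n + 1), derivative_sub, derivative_mul, derivative_X, hderiv, ih,
      hermite_succ n]
    push_cast
    ring

theorem hermite_add_two (n : ℕ) :
    hermite (n + 2) = X * hermite (n + 1) - (n + 1 : ℤ[X]) * hermite n := by
  rw [hermite_succ (n + 1), derivative_hermite_succ]

theorem abs_aeval_hermite_le_abs_pow {R : Type*} [CommRing R] [LinearOrder R]
    [IsStrictOrderedRing R] {n : ℕ} {y : R} (hn : (n : R) ≤ y ^ 2 + 1) :
    |aeval y (hermite n)| ≤ |y| ^ n := by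
  have hrec (k : ℕ) : aeval y (hermite (k + 2)) =
      y * aeval y (hermite (k + 1)) - (k + 1) * aeval y (hermite k) := by
    rw [hermite_add_two]
    simp
  have hmono : Monotone fun k : ℕ ↦ (k + 1 : R) := Nat.mono_cast.add_const 1
  have hle (k : ℕ) (hk : k + 2 ≤ n) : (k + 1 : R) ≤ y ^ 2 := by
    have : (k + 2 : R) ≤ n := mod_cast hk
    linarith
  simpa using abs_le_abs_pow_mul_of_recurrence (p := fun k ↦ aeval y (hermite k))
    (by simp) hrec (by simp) hmono n hle

end Hermite

theorem physHermite_eq_sqrt_two_pow_mul (j : ℕ) (x : ℝ) :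
    physHermite j x = √2 ^ j * Polynomial.aeval (√2 * x) (Polynomial.hermite j) := by
  rw [physHermite, Real.rpow_div_two_eq_sqrt _ zero_le_two, Real.rpow_natCast]

theorem stmt12_general {j : ℕ} {z : ℝ} (hj : (j : ℝ) ≤ 2 * z ^ 2 + 1) :
    |physHermite j z| ≤ (2 * |z|) ^ j := by
  have hsq : √2 ^ 2 = 2 := Real.sq_sqrt zero_le_two
  have hbound : |Polynomial.aeval (√2 * z) (Polynomial.hermite j)| ≤ |√2 * z| ^ j :=
    abs_aeval_hermite_le_abs_pow (by rwa [mul_pow, hsq])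
  calc |physHermite j z|
      = √2 ^ j * |Polynomial.aeval (√2 * z) (Polynomial.hermite j)| := by
        rw [physHermite_eq_sqrt_two_pow_mul, abs_mul, abs_of_nonneg (by positivity)]
    _ ≤ √2 ^ j * |√2 * z| ^ j := by gcongr
    _ = (2 * |z|) ^ j := by
      rw [abs_mul, abs_of_nonneg (Real.sqrt_nonneg 2), ← mul_pow, ← mul_assoc, ← sq, hsq]

/-- If `z > 0` and `z² > j` then `|H_j(z)| ≤ √2 · 2ʲ · zʲ`. -/
theorem stmt12 (j : ℕ) (z : ℝ) (hz : 0 < z) (hz2 : (j : ℝ) < z ^ 2) :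
    |physHermite j z| ≤ Real.sqrt 2 * 2 ^ j * z ^ j := by
  refine (stmt12_general (by linarith [sq_nonneg z])).trans ?_
  rw [abs_of_pos hz, mul_pow, mul_assoc]
  exact le_mul_of_one_le_left (by positivity) (Real.one_le_sqrt.2 one_le_two)
end

section
/- Let n ≥ 1 be an integer, α₁, …, αₙ > 0 real numbers with s = Σ_{j=1}^n α_j, and ψ : (0,1] → ℝ a measurable function such that t ↦ ψ(t)·t^{s−1} is Lebesgue integrable on (0,1]. Then ∫_{S} ψ(Σ_{j=1}^n x_j) · Π_{j=1}^n x_j^{α_j − 1} dx = ( Π_{j=1}^n Γ(α_j) / Γ(s) ) · ∫₀¹ ψ(t) · t^{s−1} dt, where S = { x ∈ ℝⁿ : x_j > 0 for all j, Σ_{j=1}^n x_j ≤ 1 }. -/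
open MeasureTheory

/-!
If `X_j` are independent with gamma laws of shapes `α_j` and common rate `1`, then `∑ X_j` has the
gamma law of shape `s = ∑ α_j`, because the moment generating functions `(1 - t) ^ (-α_j)`
multiply. The joint density of the `X_j` is `∏ x_j ^ (α_j - 1) / Γ(α_j)` times `exp (-∑ x_j)`, and
the last factor is a function of the sum alone. Removing it on both sides shows that the sum map
carries `∏ x_j ^ (α_j - 1) / Γ(α_j) dx` to `t ^ (s - 1) / Γ(s) dt`; integrating `ψ` against this
identity of measures gives the formula.
-/

open ProbabilityTheory Set

section ProductDensity

variable {ι : Type*} {X : ι → Type*} [∀ i, MeasurableSpace (X i)]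
  {μ : ∀ i, Measure (X i)} {f : ∀ i, X i → ENNReal}

lemma lmarginal_finsetProd [DecidableEq ι] [∀ i, SigmaFinite (μ i)] (hf : ∀ i, Measurable (f i))
    (s : Finset ι) (x : ∀ i, X i) :
    (∫⋯∫⁻_s, (fun y ↦ ∏ i ∈ s, f i (y i)) ∂μ) x = ∏ i ∈ s, ∫⁻ y, f i y ∂μ i := by
  induction s using Finset.induction with
  | empty => simp
  | insert i s hi ih =>
    have hcoord (y : ∀ i, X i) : ∫⁻ z, ∏ j ∈ insert i s, f j (Function.update y i z j) ∂μ i =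
        (∫⁻ z, f i z ∂μ i) * ∏ j ∈ s, f j (y j) := by
      rw [← lintegral_mul_const _ (hf i)]
      refine lintegral_congr fun z ↦ ?_
      rw [Finset.prod_insert hi, Function.update_self]
      congr 1
      refine Finset.prod_congr rfl fun j hj ↦ ?_
      rw [Function.update_of_ne (ne_of_mem_of_not_mem hj hi)]
    rw [lmarginal_insert' _ (by fun_prop) hi, Finset.prod_insert hi, ← ih]
    simp_rw [hcoord]
    exact lintegral_const_mul _
      ((Finset.measurable_fun_prod s fun j _ ↦ (hf j).comp (measurable_pi_apply j)).comp
        measurable_updateFinset)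

variable [Fintype ι]

lemma lintegral_fintype_prod_eq_prod [∀ i, SigmaFinite (μ i)] (hf : ∀ i, Measurable (f i)) :
    ∫⁻ x, ∏ i, f i (x i) ∂Measure.pi μ = ∏ i, ∫⁻ y, f i y ∂μ i := by
  classical
  rcases isEmpty_or_nonempty (∀ i, X i) with h | ⟨⟨x⟩⟩
  · obtain ⟨i, hi⟩ := isEmpty_pi.mp h
    rw [lintegral_of_isEmpty, Finset.prod_eq_zero (Finset.mem_univ i) (lintegral_of_isEmpty _ _)]
  · rw [lintegral_eq_lmarginal_univ x, lmarginal_finsetProd hf]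

lemma pi_withDensity [∀ i, SigmaFinite (μ i)] [∀ i, SigmaFinite ((μ i).withDensity (f i))]
    (hf : ∀ i, Measurable (f i)) :
    Measure.pi (fun i ↦ (μ i).withDensity (f i)) =
      (Measure.pi μ).withDensity fun x ↦ ∏ i, f i (x i) := by
  refine Measure.pi_eq fun s hs ↦ ?_
  have hrestrict : (Measure.pi μ).restrict (univ.pi s) = Measure.pi fun i ↦ (μ i).restrict (s i) :=
    Measure.restrict_pi_pi μ s
  simp_rw [withDensity_apply _ (MeasurableSet.univ_pi hs), withDensity_apply _ (hs _), hrestrict,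
    lintegral_fintype_prod_eq_prod hf]

end ProductDensity

section MGF

lemma ext_of_mgf_id_eq {μ ν : Measure ℝ} [IsProbabilityMeasure μ] [IsFiniteMeasure ν]
    (hμ : 0 ∈ interior (integrableExpSet id μ)) (h : mgf id μ = mgf id ν) : μ = ν := by
  refine Measure.ext_of_charFun (funext fun t ↦ ?_)
  rw [← complexMGF_id_mul_I, ← complexMGF_id_mul_I]
  exact eqOn_complexMGF_of_mgf h (by simpa using hμ)

lemma mgf_sum_pi {ι : Type*} [Fintype ι] (μ : ι → Measure ℝ) [∀ i, SigmaFinite (μ i)] (t : ℝ) :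
    mgf (fun x ↦ ∑ i, x i) (Measure.pi μ) t = ∏ i, mgf id (μ i) t := by
  simp_rw [mgf, Finset.mul_sum, Real.exp_sum, id]
  exact integral_fintype_prod_eq_prod fun _ y ↦ Real.exp (t * y)

end MGF

section WithDensity

variable {Y E : Type*} [MeasurableSpace Y] [NormedAddCommGroup E] [NormedSpace ℝ E]
  {μ : Measure Y} {s t : Set Y} {g : Y → ℝ}

lemma integrableOn_withDensity_restrict_iff (hs : MeasurableSet s) (ht : MeasurableSet t)
    (hg : Measurable g) (hg0 : ∀ y ∈ t, 0 ≤ g y) {f : Y → E} :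
    IntegrableOn f s ((μ.restrict t).withDensity fun y ↦ ENNReal.ofReal (g y)) ↔
      IntegrableOn (fun y ↦ g y • f y) (t ∩ s) μ := by
  rw [IntegrableOn, restrict_withDensity hs, Measure.restrict_restrict hs, inter_comm,
    integrable_withDensity_iff_integrable_smul' (by fun_prop) (by simp)]
  refine integrableOn_congr_fun (fun y hy ↦ ?_) (ht.inter hs)
  simp only [ENNReal.toReal_ofReal (hg0 y hy.1)]

lemma setIntegral_withDensity_restrict (hs : MeasurableSet s) (ht : MeasurableSet t)
    (hg : Measurable g) (hg0 : ∀ y ∈ t, 0 ≤ g y) (f : Y → E) :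
    ∫ y in s, f y ∂((μ.restrict t).withDensity fun y ↦ ENNReal.ofReal (g y)) =
      ∫ y in t ∩ s, g y • f y ∂μ := by
  rw [restrict_withDensity hs, Measure.restrict_restrict hs, inter_comm,
    integral_withDensity_eq_integral_toReal_smul (by fun_prop) (by simp)]
  refine setIntegral_congr_fun (ht.inter hs) fun y hy ↦ ?_
  simp only [ENNReal.toReal_ofReal (hg0 y hy.1)]

lemma integrableOn_withDensity_restrict_div_iff (hs : MeasurableSet s) (ht : MeasurableSet t)
    (hg : Measurable g) (hg0 : ∀ y ∈ t, 0 ≤ g y) {c : ℝ} (hc : 0 < c) {f : Y → E} :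
    IntegrableOn f s ((μ.restrict t).withDensity fun y ↦ ENNReal.ofReal (g y / c)) ↔
      IntegrableOn (fun y ↦ g y • f y) (t ∩ s) μ := by
  rw [integrableOn_withDensity_restrict_iff hs ht (hg.div_const c)
    fun y hy ↦ div_nonneg (hg0 y hy) hc.le]
  simp_rw [div_eq_inv_mul, mul_smul]
  exact integrable_fun_smul_iff (inv_ne_zero hc.ne') _

lemma setIntegral_withDensity_restrict_div (hs : MeasurableSet s) (ht : MeasurableSet t)
    (hg : Measurable g) (hg0 : ∀ y ∈ t, 0 ≤ g y) {c : ℝ} (hc : 0 < c) (f : Y → E) :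
    ∫ y in s, f y ∂((μ.restrict t).withDensity fun y ↦ ENNReal.ofReal (g y / c)) =
      c⁻¹ • ∫ y in t ∩ s, g y • f y ∂μ := by
  rw [setIntegral_withDensity_restrict hs ht (hg.div_const c)
    fun y hy ↦ div_nonneg (hg0 y hy) hc.le]
  simp_rw [div_eq_inv_mul, mul_smul]
  exact integral_smul _ _

lemma map_withDensity_comp {Z : Type*} [MeasurableSpace Z] {φ : Y → Z} (hφ : Measurable φ)
    {w : Z → ENNReal} (hw : Measurable w) :
    (μ.withDensity (w ∘ φ)).map φ = (μ.map φ).withDensity w := by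
  ext A hA
  rw [Measure.map_apply hφ hA, withDensity_apply _ (hφ hA), withDensity_apply _ hA,
    setLIntegral_map hA hw hφ]
  rfl

end WithDensity

section GammaMeasure

variable {a r t : ℝ}

lemma gammaMeasure_eq_withDensity_restrict_Ioi (a r : ℝ) :
    gammaMeasure a r = (volume.restrict (Ioi 0)).withDensity fun x ↦
      ENNReal.ofReal (r ^ a / Real.Gamma a * x ^ (a - 1) * Real.exp (-(r * x))) := by
  rw [gammaMeasure, restrict_Ioi_eq_restrict_Ici, ← withDensity_indicator measurableSet_Ici]
  congr with x
  by_cases hx : 0 ≤ x <;> simp [gammaPDF_eq, hx, indicator]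

lemma gammaDensity_nonneg (ha : 0 < a) (hr : 0 < r) :
    ∀ x ∈ Ioi (0 : ℝ), 0 ≤ r ^ a / Real.Gamma a * x ^ (a - 1) * Real.exp (-(r * x)) := by
  intro x (hx : 0 < x)
  have := Real.Gamma_pos_of_pos ha
  positivity

lemma mgf_id_gammaMeasure (ha : 0 < a) (hr : 0 < r) (ht : t < r) :
    mgf id (gammaMeasure a r) t = (r / (r - t)) ^ a := by
  have hrt : 0 < r - t := sub_pos.mpr ht
  calc
    mgf id (gammaMeasure a r) t = ∫ x in Ioi 0, r ^ a / Real.Gamma a *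
        (x ^ (a - 1) * Real.exp (-((r - t) * x))) := by
      rw [mgf, ← setIntegral_univ, gammaMeasure_eq_withDensity_restrict_Ioi,
        setIntegral_withDensity_restrict .univ measurableSet_Ioi (by fun_prop)
          (gammaDensity_nonneg ha hr), inter_univ]
      refine integral_congr_ae (.of_forall fun x ↦ ?_)
      simp only [id, smul_eq_mul, mul_assoc, ← Real.exp_add]
      ring_nf
    _ = r ^ a / Real.Gamma a * ((1 / (r - t)) ^ a * Real.Gamma a) := by
      rw [integral_const_mul, Real.integral_rpow_mul_exp_neg_mul_Ioi ha hrt]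
    _ = (r / (r - t)) ^ a := by
      have hΓ := (Real.Gamma_pos_of_pos ha).ne'
      rw [Real.div_rpow zero_le_one hrt.le, Real.one_rpow, Real.div_rpow hr.le hrt.le]
      field_simp

lemma not_integrable_exp_mul_gammaMeasure (ha : 0 < a) (hr : 0 < r) (ht : r ≤ t) :
    ¬ Integrable (fun x ↦ Real.exp (t * x)) (gammaMeasure a r) := by
  rw [← integrableOn_univ, gammaMeasure_eq_withDensity_restrict_Ioi,
    integrableOn_withDensity_restrict_iff .univ measurableSet_Ioi (by fun_prop)
      (gammaDensity_nonneg ha hr), inter_univ]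
  intro hint
  have hc : r ^ a / Real.Gamma a ≠ 0 := by
    have := Real.Gamma_pos_of_pos ha
    positivity
  -- For `t ≥ r` the integrand dominates a multiple of `x ^ (a - 1)`.
  refine not_integrableOn_Ioi_rpow (a - 1) ((hint.const_mul (r ^ a / Real.Gamma a)⁻¹).mono'
    (by fun_prop) ((ae_restrict_mem measurableSet_Ioi).mono fun x (hx : 0 < x) ↦ ?_))
  have hexp : 1 ≤ Real.exp (-(r * x)) * Real.exp (t * x) := by
    rw [← Real.exp_add]
    exact Real.one_le_exp (by nlinarith)
  rw [smul_eq_mul, mul_assoc, mul_assoc, inv_mul_cancel_left₀ hc,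
    Real.norm_of_nonneg (by positivity)]
  exact le_mul_of_one_le_right (by positivity) hexp

lemma integrableExpSet_id_gammaMeasure (ha : 0 < a) (hr : 0 < r) :
    integrableExpSet id (gammaMeasure a r) = Iio r := by
  have := isProbabilityMeasure_gammaMeasure ha hr
  ext t
  refine ⟨fun hint ↦ ?_, fun ht : t < r ↦ ?_⟩
  · by_contra! ht
    exact not_integrable_exp_mul_gammaMeasure ha hr (by simpa using ht) hint
  · have := sub_pos.mpr ht
    refine mgf_pos_iff.mp ?_
    rw [mgf_id_gammaMeasure ha hr ht]
    positivity

variable {ι : Type*} [Fintype ι] [Nonempty ι] {α : ι → ℝ}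

lemma map_sum_pi_gammaMeasure (hα : ∀ i, 0 < α i) (hr : 0 < r) :
    (Measure.pi fun i ↦ gammaMeasure (α i) r).map (fun x ↦ ∑ i, x i) =
      gammaMeasure (∑ i, α i) r := by
  have hs : 0 < ∑ i, α i := Finset.sum_pos (fun i _ ↦ hα i) Finset.univ_nonempty
  have := isProbabilityMeasure_gammaMeasure hs hr
  have (i : ι) := isProbabilityMeasure_gammaMeasure (hα i) hr
  symm
  refine ext_of_mgf_id_eq ?_ (funext fun t ↦ ?_)
  · simpa [integrableExpSet_id_gammaMeasure hs hr] using hr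
  rw [mgf_id_map (by fun_prop), mgf_sum_pi]
  rcases lt_or_ge t r with ht | ht
  · have hrt : 0 < r / (r - t) := div_pos hr (sub_pos.mpr ht)
    simp_rw [mgf_id_gammaMeasure hs hr ht, mgf_id_gammaMeasure (hα _) hr ht,
      Real.rpow_sum_of_pos hrt]
  · -- Here the exponential moments are infinite, and `mgf` takes its junk value `0` on both sides.
    have hzero {a : ℝ} (ha : 0 < a) : mgf id (gammaMeasure a r) t = 0 :=
      mgf_undef (not_integrable_exp_mul_gammaMeasure ha hr ht)
    rw [hzero hs, Finset.prod_eq_zero (Finset.mem_univ (Classical.arbitrary ι)) (hzero (hα _))]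

end GammaMeasure

/-- The measure on `(0, ∞)` whose density is the Riemann–Liouville kernel `t ^ (a - 1) / Γ(a)`,
convolution with which is fractional integration of order `a`. It is the gamma law of shape `a`
freed of its exponential factor; for `a > 0` the normalisation by `Γ(a)` makes it additive in `a`
under convolution. -/
noncomputable def riemannLiouvilleMeasure (a : ℝ) : Measure ℝ :=
  (volume.restrict (Ioi 0)).withDensity fun t ↦ ENNReal.ofReal (t ^ (a - 1) / Real.Gamma a)

section RiemannLiouville

instance (a : ℝ) : SigmaFinite (riemannLiouvilleMeasure a) :=
  SigmaFinite.withDensity_ofReal _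

lemma riemannLiouvilleMeasure_eq_withDensity_gammaMeasure (a : ℝ) :
    riemannLiouvilleMeasure a =
      (gammaMeasure a 1).withDensity fun t ↦ ENNReal.ofReal (Real.exp t) := by
  rw [gammaMeasure_eq_withDensity_restrict_Ioi, ← withDensity_mul _ (by fun_prop) (by fun_prop),
    riemannLiouvilleMeasure]
  congr with t
  rw [Pi.mul_apply, ← ENNReal.ofReal_mul' (Real.exp_nonneg t), mul_assoc, ← Real.exp_add, one_mul,
    neg_add_cancel, Real.exp_zero, mul_one, Real.one_rpow, one_div_mul_eq_div]

lemma measurableSet_setOf_forall_pos {ι : Type*} [Countable ι] :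
    MeasurableSet {x : ι → ℝ | ∀ i, 0 < x i} := by
  measurability

variable {a : ℝ} {ι : Type*} [Fintype ι] {α : ι → ℝ}

lemma map_sum_pi_riemannLiouvilleMeasure [Nonempty ι] (hα : ∀ i, 0 < α i) :
    (Measure.pi fun i ↦ riemannLiouvilleMeasure (α i)).map (fun x ↦ ∑ i, x i) =
      riemannLiouvilleMeasure (∑ i, α i) := by
  have (i : ι) := isProbabilityMeasure_gammaMeasure (hα i) one_pos
  have hexp (x : ι → ℝ) : ∏ i, ENNReal.ofReal (Real.exp (x i)) =
      ENNReal.ofReal (Real.exp (∑ i, x i)) := by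
    rw [Real.exp_sum, ENNReal.ofReal_prod_of_nonneg fun i _ ↦ Real.exp_nonneg (x i)]
  simp_rw [riemannLiouvilleMeasure_eq_withDensity_gammaMeasure]
  rw [pi_withDensity fun _ ↦ by fun_prop]
  simp_rw [hexp]
  rw [← map_sum_pi_gammaMeasure hα one_pos]
  exact map_withDensity_comp (w := fun t ↦ ENNReal.ofReal (Real.exp t)) (by fun_prop) (by fun_prop)

lemma pi_riemannLiouvilleMeasure (hα : ∀ i, 0 < α i) :
    Measure.pi (fun i ↦ riemannLiouvilleMeasure (α i)) =
      (volume.restrict {x : ι → ℝ | ∀ i, 0 < x i}).withDensity fun x ↦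
        ENNReal.ofReal ((∏ i, x i ^ (α i - 1)) / ∏ i, Real.Gamma (α i)) := by
  have horthant : univ.pi (fun _ ↦ Ioi 0) = {x : ι → ℝ | ∀ i, 0 < x i} := by
    ext x
    simp
  have hvol : Measure.pi (fun _ : ι ↦ (volume : Measure ℝ).restrict (Ioi 0)) =
      volume.restrict {x : ι → ℝ | ∀ i, 0 < x i} := by
    rw [← horthant, volume_pi, Measure.restrict_pi_pi]
  simp_rw [riemannLiouvilleMeasure]
  rw [pi_withDensity fun _ ↦ by fun_prop, hvol]
  refine withDensity_congr_ae ((ae_restrict_mem measurableSet_setOf_forall_pos).mono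
    fun x (hx : ∀ i, 0 < x i) ↦ ?_)
  have hnonneg (i : ι) : 0 ≤ x i ^ (α i - 1) / Real.Gamma (α i) :=
    div_nonneg (Real.rpow_nonneg (hx i).le _) (Real.Gamma_pos_of_pos (hα i)).le
  simp only [← Finset.prod_div_distrib, ENNReal.ofReal_prod_of_nonneg fun i _ ↦ hnonneg i]

variable {E : Type*} [NormedAddCommGroup E] [NormedSpace ℝ E] {ψ : ℝ → E}

lemma integrableOn_riemannLiouvilleMeasure_iff (ha : 0 < a) {T : Set ℝ} (hT : MeasurableSet T) :
    IntegrableOn ψ T (riemannLiouvilleMeasure a) ↔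
      IntegrableOn (fun t ↦ t ^ (a - 1) • ψ t) (Ioi 0 ∩ T) :=
  integrableOn_withDensity_restrict_div_iff hT measurableSet_Ioi (by fun_prop)
    (fun _ ht ↦ Real.rpow_nonneg (le_of_lt ht) _) (Real.Gamma_pos_of_pos ha)

lemma setIntegral_riemannLiouvilleMeasure (ha : 0 < a) {T : Set ℝ} (hT : MeasurableSet T)
    (ψ : ℝ → E) :
    ∫ t in T, ψ t ∂riemannLiouvilleMeasure a =
      (Real.Gamma a)⁻¹ • ∫ t in Ioi 0 ∩ T, t ^ (a - 1) • ψ t :=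
  setIntegral_withDensity_restrict_div hT measurableSet_Ioi (by fun_prop)
    (fun _ ht ↦ Real.rpow_nonneg (le_of_lt ht) _) (Real.Gamma_pos_of_pos ha) ψ

lemma integrableOn_pi_riemannLiouvilleMeasure_iff (hα : ∀ i, 0 < α i) {A : Set (ι → ℝ)}
    (hA : MeasurableSet A) {f : (ι → ℝ) → E} :
    IntegrableOn f A (Measure.pi fun i ↦ riemannLiouvilleMeasure (α i)) ↔
      IntegrableOn (fun x ↦ (∏ i, x i ^ (α i - 1)) • f x) ({x | ∀ i, 0 < x i} ∩ A) := by
  rw [pi_riemannLiouvilleMeasure hα]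
  exact integrableOn_withDensity_restrict_div_iff hA measurableSet_setOf_forall_pos (by fun_prop)
    (fun x hx ↦ Finset.prod_nonneg fun i _ ↦ Real.rpow_nonneg (hx i).le _)
    (Finset.prod_pos fun i _ ↦ Real.Gamma_pos_of_pos (hα i))

lemma setIntegral_pi_riemannLiouvilleMeasure (hα : ∀ i, 0 < α i) {A : Set (ι → ℝ)}
    (hA : MeasurableSet A) (f : (ι → ℝ) → E) :
    ∫ x in A, f x ∂Measure.pi (fun i ↦ riemannLiouvilleMeasure (α i)) =
      (∏ i, Real.Gamma (α i))⁻¹ •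
        ∫ x in {x | ∀ i, 0 < x i} ∩ A, (∏ i, x i ^ (α i - 1)) • f x := by
  rw [pi_riemannLiouvilleMeasure hα]
  exact setIntegral_withDensity_restrict_div hA measurableSet_setOf_forall_pos (by fun_prop)
    (fun x hx ↦ Finset.prod_nonneg fun i _ ↦ Real.rpow_nonneg (hx i).le _)
    (Finset.prod_pos fun i _ ↦ Real.Gamma_pos_of_pos (hα i)) f

end RiemannLiouville

theorem stmt15_general {ι E : Type*} [Fintype ι] [Nonempty ι] [NormedAddCommGroup E]
    [NormedSpace ℝ E] {α : ι → ℝ} (hα : ∀ j, 0 < α j) {T : Set ℝ} (hT : MeasurableSet T)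
    {ψ : ℝ → E} (hint : IntegrableOn (fun t ↦ t ^ (∑ j, α j - 1) • ψ t) (Ioi 0 ∩ T)) :
    IntegrableOn (fun x : ι → ℝ ↦ (∏ j, x j ^ (α j - 1)) • ψ (∑ j, x j))
        {x | (∀ j, 0 < x j) ∧ ∑ j, x j ∈ T} ∧
      ∫ x in {x : ι → ℝ | (∀ j, 0 < x j) ∧ ∑ j, x j ∈ T},
          (∏ j, x j ^ (α j - 1)) • ψ (∑ j, x j) =
        ((∏ j, Real.Gamma (α j)) / Real.Gamma (∑ j, α j)) •
          ∫ t in Ioi 0 ∩ T, t ^ (∑ j, α j - 1) • ψ t := by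
  have hs : 0 < ∑ j, α j := Finset.sum_pos (fun j _ ↦ hα j) Finset.univ_nonempty
  have hΓ : ∏ j, Real.Gamma (α j) ≠ 0 :=
    Finset.prod_ne_zero_iff.mpr fun j _ ↦ (Real.Gamma_pos_of_pos (hα j)).ne'
  have hsum : Measurable fun x : ι → ℝ ↦ ∑ j, x j := by fun_prop
  have hψ : IntegrableOn ψ T (riemannLiouvilleMeasure (∑ j, α j)) :=
    (integrableOn_riemannLiouvilleMeasure_iff hs hT).mpr hint
  have hintegral := setIntegral_riemannLiouvilleMeasure hs hT ψ
  rw [← map_sum_pi_riemannLiouvilleMeasure hα] at hψ hintegral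
  rw [IntegrableOn, Measure.restrict_map hsum hT] at hψ
  rw [Measure.restrict_map hsum hT, integral_map hsum.aemeasurable hψ.aestronglyMeasurable,
    setIntegral_pi_riemannLiouvilleMeasure hα (hsum hT), inv_smul_eq_iff₀ hΓ, smul_smul,
    ← div_eq_mul_inv] at hintegral
  exact ⟨(integrableOn_pi_riemannLiouvilleMeasure_iff hα (hsum hT)).mp
    (hψ.comp_measurable hsum), hintegral⟩

/-- The Dirichlet integral formula: for `α₁,…,αₙ > 0` with `s = Σ αⱼ` and a measurable `ψ`
with `t ↦ ψ(t) t^{s−1}` integrable on `(0,1]`,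
`∫_{S} ψ(Σxⱼ) Π xⱼ^{αⱼ−1} dx = (Π Γ(αⱼ)/Γ(s)) ∫₀¹ ψ(t) t^{s−1} dt`, where `S` is the open
unit simplex `{x : xⱼ > 0, Σ xⱼ ≤ 1}`. -/
theorem stmt15 (n : ℕ) (hn : 1 ≤ n) (α : Fin n → ℝ) (hα : ∀ j, 0 < α j)
    (ψ : ℝ → ℝ) (hψ : Measurable ψ)
    (hint : IntegrableOn (fun t => ψ t * t ^ ((∑ j, α j) - 1)) (Set.Ioc (0 : ℝ) 1)) :
    (∫ x in {x : Fin n → ℝ | (∀ j, 0 < x j) ∧ ∑ j, x j ≤ 1},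
        ψ (∑ j, x j) * ∏ j, (x j) ^ (α j - 1))
      = ((∏ j, Real.Gamma (α j)) / Real.Gamma (∑ j, α j))
          * ∫ t in Set.Ioc (0 : ℝ) 1, ψ t * t ^ ((∑ j, α j) - 1) := by
  have : Nonempty (Fin n) := Fin.pos_iff_nonempty.mp hn
  simpa only [smul_eq_mul, mul_comm, mem_Iic, Ioi_inter_Iic] using
    (stmt15_general (ψ := ψ) hα measurableSet_Iic
      (by simpa only [smul_eq_mul, mul_comm, Ioi_inter_Iic] using hint)).2
end

section
/- There exists a universal constant C > 0 such that the following holds. Let k ≥ 3 be an integer, a > 0 a real number, and ε ∈ (0,1). Let θ₁, …, θ_k be independent real Gaussian random variables with θ_j ~ N(0, a⁻¹·e^{−j/a}). Then P( Σ_{j=1}^k θ_j² ≤ ε²/2 ) ≥ (C/k) · e^{k(k+1)/(4a)} · e^{−k²/(2a)} · (2e·ε²/k)^{k/2}. -/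
open MeasureTheory ProbabilityTheory

open Metric
open scoped NNReal Real Nat

/-!
The two exponential prefactors multiply to `e^{-k(k-1)/(4a)} ≤ 1`, and `a⁻¹e^{-j/a} ≤ (e j)⁻¹`
whatever `a` is, so it suffices to treat variances bounded by `b / j` with `b = e⁻¹`. The ball
`∑ θⱼ² ≤ t` contains the cube `|θⱼ| ≤ √(t/k)`, whose probability is a product. Each factor only
decreases when its variance is raised to `b / j`, and is then at least the length of the interval
times the density at its endpoint, that is, at least `√(c j)` with
`c = (2/π) (t/(kb)) e^{-t/b}`. The product of these bounds is `√(cᵏ k!)`, and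
`k! ≥ xᵏ e^{-x}` with `x = 2π e^{t/b}` absorbs the geometric loss into a constant.
-/

section Gaussian

variable {μ : ℝ} {v w : ℝ≥0}

lemma gaussianPDFReal_le_gaussianPDFReal_of_abs_sub_le {x y : ℝ} (h : |x - μ| ≤ |y - μ|) :
    gaussianPDFReal μ v y ≤ gaussianPDFReal μ v x := by
  have hsq : (x - μ) ^ 2 ≤ (y - μ) ^ 2 := sq_le_sq.mpr h
  simp only [gaussianPDFReal_def]
  gcongr

lemma ofReal_two_mul_mul_gaussianPDFReal_le_gaussianReal_closedBall (hv : v ≠ 0) (μ r : ℝ) :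
    ENNReal.ofReal (2 * r * gaussianPDFReal μ v (μ + r)) ≤ gaussianReal μ v (closedBall μ r) := by
  rw [gaussianReal_apply μ hv]
  calc ENNReal.ofReal (2 * r * gaussianPDFReal μ v (μ + r))
      = ∫⁻ _ in closedBall μ r, gaussianPDF μ v (μ + r) := by
        rw [setLIntegral_const, Real.volume_closedBall, gaussianPDF, mul_comm,
          ENNReal.ofReal_mul (gaussianPDFReal_nonneg _ _ _)]
    _ ≤ ∫⁻ x in closedBall μ r, gaussianPDF μ v x := by
        refine setLIntegral_mono' measurableSet_closedBall fun x hx => ?_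
        refine ENNReal.ofReal_le_ofReal (gaussianPDFReal_le_gaussianPDFReal_of_abs_sub_le ?_)
        rw [add_sub_cancel_left]
        exact (mem_closedBall_iff_norm.mp hx).trans (le_abs_self r)

lemma two_mul_mul_gaussianPDFReal_zero_self (v : ℝ≥0) {r : ℝ} (hr : 0 ≤ r) :
    2 * r * gaussianPDFReal 0 v r = √(2 / π * (r ^ 2 / v) * Real.exp (-(r ^ 2 / v))) := by
  rw [eq_comm, Real.sqrt_eq_iff_eq_sq (by positivity)
    (mul_nonneg (by positivity) (gaussianPDFReal_nonneg 0 v r)), gaussianPDFReal_def]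
  have hexp : Real.exp (-(r - 0) ^ 2 / (2 * v)) ^ 2 = Real.exp (-(r ^ 2 / v)) := by
    rw [← Real.exp_nat_mul]
    congr 1
    ring
  simp only [mul_pow, inv_pow]
  rw [hexp, Real.sq_sqrt (by positivity)]
  ring

lemma exists_gaussianReal_eq_map_homothety (μ : ℝ) (h : v ≤ w) :
    ∃ c ∈ Set.Icc (0 : ℝ) 1,
      gaussianReal μ v = (gaussianReal μ w).map fun x => c * x + (1 - c) * μ := by
  set c : ℝ := √(v / w)
  have hvar : (.mk (c ^ 2) (sq_nonneg c) * w : ℝ≥0) = v := by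
    ext
    rw [NNReal.coe_mul, NNReal.coe_mk, Real.sq_sqrt (by positivity), ← NNReal.coe_div,
      ← NNReal.coe_mul, div_mul_cancel_of_imp fun hw => le_zero_iff.mp (hw ▸ h)]
  refine ⟨c, ⟨Real.sqrt_nonneg _, Real.sqrt_le_one.mpr (div_le_one_of_le₀ h w.2)⟩, ?_⟩
  calc gaussianReal μ v
      = ((gaussianReal μ w).map (c * ·)).map (· + (1 - c) * μ) := by
        rw [gaussianReal_map_const_mul, gaussianReal_map_add_const, hvar]
        ring_nf
    _ = (gaussianReal μ w).map fun x => c * x + (1 - c) * μ :=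
        Measure.map_map (by fun_prop) (by fun_prop)

lemma gaussianReal_closedBall_anti (μ r : ℝ) (h : v ≤ w) :
    gaussianReal μ w (closedBall μ r) ≤ gaussianReal μ v (closedBall μ r) := by
  obtain ⟨c, ⟨hc0, hc1⟩, hmap⟩ := exists_gaussianReal_eq_map_homothety μ h
  rw [hmap, Measure.map_apply (by fun_prop) measurableSet_closedBall]
  refine measure_mono fun x hx => ?_
  rw [mem_closedBall_iff_norm] at hx
  rw [Set.mem_preimage, mem_closedBall_iff_norm]
  calc ‖c * x + (1 - c) * μ - μ‖ = c * ‖x - μ‖ := by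
        rw [show c * x + (1 - c) * μ - μ = c * (x - μ) by ring, norm_mul, Real.norm_of_nonneg hc0]
    _ ≤ ‖x - μ‖ := mul_le_of_le_one_left (norm_nonneg _) hc1
    _ ≤ r := hx

end Gaussian

lemma closedBall_subset_setOf_sum_sq_le {ι : Type*} [Fintype ι] {r t : ℝ}
    (h : Fintype.card ι * r ^ 2 ≤ t) :
    closedBall (0 : ι → ℝ) r ⊆ {θ | ∑ i, θ i ^ 2 ≤ t} := by
  intro θ hθ
  have habs (i : ι) : |θ i| ≤ |r| :=
    (norm_le_pi_norm θ i).trans ((mem_closedBall_zero_iff.mp hθ).trans (le_abs_self r))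
  calc ∑ i, θ i ^ 2 ≤ ∑ _i : ι, r ^ 2 := Finset.sum_le_sum fun i _ => sq_le_sq.mpr (habs i)
    _ = Fintype.card ι * r ^ 2 := by simp
    _ ≤ t := h

lemma prod_sqrt_mul_add_one {c : ℝ} (hc : 0 ≤ c) (k : ℕ) :
    ∏ j : Fin k, √(c * (j + 1)) = √(c ^ k * k !) := by
  rw [← Real.sqrt_prod _ fun j _ => by positivity, Finset.prod_mul_distrib, Fin.prod_const,
    Fin.prod_univ_eq_prod_range (fun j : ℕ => (j : ℝ) + 1) k,
    ← Finset.prod_range_add_one_eq_factorial]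
  push_cast
  rfl

lemma exp_neg_mul_pow_le_factorial {x : ℝ} (hx : 0 ≤ x) (k : ℕ) :
    Real.exp (-x) * x ^ k ≤ k ! := by
  have h := Real.pow_div_factorial_le_exp x hx k
  rw [div_le_iff₀ (by positivity)] at h
  rwa [Real.exp_neg, inv_mul_le_iff₀ (Real.exp_pos x)]

lemma exp_neg_mul_rpow_half_le_sqrt_pow_mul_factorial {c x : ℝ} (hc : 0 ≤ c) (hx : 0 ≤ x) (k : ℕ) :
    Real.exp (-x) * (c * (2 * x)) ^ ((k : ℝ) / 2) ≤ √(c ^ k * k !) := by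
  refine Real.le_sqrt_of_sq_le ?_
  calc (Real.exp (-x) * (c * (2 * x)) ^ ((k : ℝ) / 2)) ^ 2
      = c ^ k * (Real.exp (-(2 * x)) * (2 * x) ^ k) := by
        rw [mul_pow, ← Real.exp_nat_mul, ← Real.rpow_mul_natCast (by positivity),
          Nat.cast_ofNat, div_mul_cancel₀ _ two_ne_zero, Real.rpow_natCast, mul_pow]
        ring_nf
    _ ≤ c ^ k * k ! := by gcongr; exact exp_neg_mul_pow_le_factorial (by positivity) k

lemma ofReal_sqrt_le_gaussianReal_closedBall {v : ℝ≥0} {w r : ℝ} (hw : 0 < w) (hvw : v ≤ w)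
    (hr : 0 ≤ r) :
    ENNReal.ofReal √(2 / π * (r ^ 2 / w) * Real.exp (-(r ^ 2 / w)))
      ≤ gaussianReal 0 v (closedBall 0 r) := by
  lift w to ℝ≥0 using hw.le
  rw [← two_mul_mul_gaussianPDFReal_zero_self w hr]
  calc ENNReal.ofReal (2 * r * gaussianPDFReal 0 w r)
      ≤ gaussianReal 0 w (closedBall 0 r) := by
        simpa only [zero_add] using ofReal_two_mul_mul_gaussianPDFReal_le_gaussianReal_closedBall
          (NNReal.coe_pos.mp hw).ne' 0 r
    _ ≤ gaussianReal 0 v (closedBall 0 r) := gaussianReal_closedBall_anti 0 r hvw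

lemma ofReal_sqrt_mul_le_gaussianReal_closedBall {k : ℕ} (j : Fin k) {b t : ℝ} {v : ℝ≥0}
    (hb : 0 < b) (hv : v ≤ b / (j + 1)) (ht : 0 ≤ t) :
    ENNReal.ofReal √(2 / π * (t / (b * k)) * Real.exp (-(t / b)) * (j + 1))
      ≤ gaussianReal 0 v (closedBall 0 √(t / k)) := by
  have hk : (0 : ℝ) < k := by exact_mod_cast j.pos
  have hj : (j : ℝ) + 1 ≤ k := by exact_mod_cast j.isLt
  have hratio : √(t / k) ^ 2 / (b / (j + 1)) = t / (b * k) * (j + 1) := by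
    rw [Real.sq_sqrt (by positivity)]
    field_simp
  have hratio_le : t / (b * k) * (j + 1) ≤ t / b := by
    calc t / (b * k) * (j + 1) ≤ t / (b * k) * k := by gcongr
      _ = t / b := by field_simp
  refine le_trans (ENNReal.ofReal_le_ofReal (Real.sqrt_le_sqrt ?_))
    (ofReal_sqrt_le_gaussianReal_closedBall (by positivity) hv (Real.sqrt_nonneg _))
  rw [hratio]
  calc 2 / π * (t / (b * k)) * Real.exp (-(t / b)) * (j + 1)
      = 2 / π * (t / (b * k) * (j + 1)) * Real.exp (-(t / b)) := by ring
    _ ≤ 2 / π * (t / (b * k) * (j + 1)) * Real.exp (-(t / (b * k) * (j + 1))) := by gcongr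

lemma coe_toNNReal_inv_mul_exp_neg_div_le {a s : ℝ} (ha : 0 < a) (hs : 0 < s) :
    (a⁻¹ * Real.exp (-s / a)).toNNReal ≤ Real.exp (-1) / s := by
  rw [Real.coe_toNNReal _ (by positivity), le_div_iff₀ hs]
  calc a⁻¹ * Real.exp (-s / a) * s = s / a * Real.exp (-(s / a)) := by ring_nf
    _ ≤ Real.exp (-1) := Real.mul_exp_neg_le_exp_neg_one _

lemma exp_mul_exp_le_one {k a : ℝ} (hk : 1 ≤ k) (ha : 0 < a) :
    Real.exp (k * (k + 1) / (4 * a)) * Real.exp (-k ^ 2 / (2 * a)) ≤ 1 := by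
  have hexponent : k * (k + 1) / (4 * a) + -k ^ 2 / (2 * a) = -(k * (k - 1) / (4 * a)) := by
    ring
  rw [← Real.exp_add, hexponent, Real.exp_le_one_iff, neg_nonpos]
  exact div_nonneg (mul_nonneg (by positivity) (sub_nonneg.mpr hk)) (by positivity)

lemma div_mul_exp_mul_exp_mul_rpow_le {k a ε : ℝ} (hk : 1 ≤ k) (ha : 0 < a) (hε : ε ^ 2 ≤ 1) :
    Real.exp (-(π * Real.exp (Real.exp 1 / 2))) / k * Real.exp (k * (k + 1) / (4 * a))
        * Real.exp (-k ^ 2 / (2 * a)) * (2 * Real.exp 1 * ε ^ 2 / k) ^ (k / 2)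
      ≤ Real.exp (-(π * Real.exp (ε ^ 2 / 2 / Real.exp (-1))))
        * (4 * (ε ^ 2 / 2) / (Real.exp (-1) * k)) ^ (k / 2) := by
  have hbase : 4 * (ε ^ 2 / 2) / (Real.exp (-1) * k) = 2 * Real.exp 1 * ε ^ 2 / k := by
    rw [Real.exp_neg]
    field_simp
    ring
  have hconst : ε ^ 2 / 2 / Real.exp (-1) ≤ Real.exp 1 / 2 := by
    rw [Real.exp_neg, div_inv_eq_mul]
    nlinarith [Real.exp_pos 1]
  rw [hbase, mul_assoc (_ / k)]
  gcongr ?_ * _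
  calc Real.exp (-(π * Real.exp (Real.exp 1 / 2))) / k
        * (Real.exp (k * (k + 1) / (4 * a)) * Real.exp (-k ^ 2 / (2 * a)))
      ≤ Real.exp (-(π * Real.exp (Real.exp 1 / 2))) / k :=
        mul_le_of_le_one_right (by positivity) (exp_mul_exp_le_one hk ha)
    _ ≤ Real.exp (-(π * Real.exp (Real.exp 1 / 2))) := div_le_self (Real.exp_pos _).le hk
    _ ≤ Real.exp (-(π * Real.exp (ε ^ 2 / 2 / Real.exp (-1)))) := by gcongr

theorem stmt16_general {k : ℕ} {b t : ℝ} {v : Fin k → ℝ≥0} (hb : 0 < b)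
    (hv : ∀ j, v j ≤ b / (j + 1)) (ht : 0 ≤ t) :
    ENNReal.ofReal (Real.exp (-(π * Real.exp (t / b))) * (4 * t / (b * k)) ^ ((k : ℝ) / 2))
      ≤ Measure.pi (fun j => gaussianReal 0 (v j)) {θ | ∑ j, θ j ^ 2 ≤ t} := by
  set c : ℝ := 2 / π * (t / (b * k)) * Real.exp (-(t / b)) with hc
  have hc_nonneg : 0 ≤ c := by positivity
  have hbase : 4 * t / (b * k) = c * (2 * (π * Real.exp (t / b))) := by
    rw [hc, Real.exp_neg]
    field_simp
    ring
  have hcube : Fintype.card (Fin k) * √(t / k) ^ 2 ≤ t := by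
    rw [Fintype.card_fin, Real.sq_sqrt (by positivity), mul_div_left_comm]
    exact mul_le_of_le_one_right ht (div_self_le_one _)
  calc ENNReal.ofReal (Real.exp (-(π * Real.exp (t / b))) * (4 * t / (b * k)) ^ ((k : ℝ) / 2))
      ≤ ENNReal.ofReal √(c ^ k * k !) := by
        rw [hbase]
        exact ENNReal.ofReal_le_ofReal
          (exp_neg_mul_rpow_half_le_sqrt_pow_mul_factorial hc_nonneg (by positivity) k)
    _ = ∏ j : Fin k, ENNReal.ofReal √(c * (j + 1)) := by
        rw [← prod_sqrt_mul_add_one hc_nonneg,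
          ENNReal.ofReal_prod_of_nonneg fun _ _ => Real.sqrt_nonneg _]
    _ ≤ ∏ j, gaussianReal 0 (v j) (closedBall 0 √(t / k)) :=
        Finset.prod_le_prod' fun j _ => ofReal_sqrt_mul_le_gaussianReal_closedBall j hb (hv j) ht
    _ = Measure.pi (fun j => gaussianReal 0 (v j)) (closedBall 0 √(t / k)) :=
        (Measure.pi_closedBall _ _ (Real.sqrt_nonneg _)).symm
    _ ≤ Measure.pi (fun j => gaussianReal 0 (v j)) {θ | ∑ j, θ j ^ 2 ≤ t} :=
        measure_mono (closedBall_subset_setOf_sum_sq_le hcube)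

/-- Gaussian small-ball lower bound for the truncated Karhunen–Loève coefficients of the
rescaled squared-exponential process: there is a universal constant `C > 0` such that for
independent `θⱼ ~ N(0, a⁻¹e^{−j/a})`, `j = 1,…,k` (`k ≥ 3`, `a > 0`, `ε ∈ (0,1)`),
`P(Σⱼ θⱼ² ≤ ε²/2) ≥ (C/k) e^{k(k+1)/(4a)} e^{−k²/(2a)} (2eε²/k)^{k/2}`. -/
theorem stmt16 :
    ∃ C : ℝ, 0 < C ∧
      ∀ (k : ℕ) (_hk : 3 ≤ k) (a : ℝ) (_ha : 0 < a) (ε : ℝ) (_hε0 : 0 < ε) (_hε1 : ε < 1),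
        ENNReal.ofReal ((C / k) * Real.exp ((k : ℝ) * (k + 1) / (4 * a))
            * Real.exp (-(k : ℝ) ^ 2 / (2 * a))
            * (2 * Real.exp 1 * ε ^ 2 / k) ^ ((k : ℝ) / 2))
          ≤ (Measure.pi fun j : Fin k =>
                gaussianReal 0 (a⁻¹ * Real.exp (-((j : ℝ) + 1) / a)).toNNReal)
              {θ : Fin k → ℝ | ∑ j, θ j ^ 2 ≤ ε ^ 2 / 2} := by
  refine ⟨Real.exp (-(π * Real.exp (Real.exp 1 / 2))), Real.exp_pos _,
    fun k hk a ha ε hε0 hε1 => (ENNReal.ofReal_le_ofReal ?_).trans (stmt16_general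
      (Real.exp_pos _) (fun j => coe_toNNReal_inv_mul_exp_neg_div_le ha (by positivity))
      (by positivity))⟩
  exact div_mul_exp_mul_exp_mul_rpow_le (by norm_cast; lia) ha (pow_le_one₀ hε0.le hε1.le)
end
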